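/- arXiv:2201.00984 — 2 statements merged into one kernel-verified Lean document; each statement's English description precedes it below -/
import Mathlib

section
/- Let (R, m, k) be a Cohen–Macaulay commutative Noetherian local ring of dimension d with minimal multiplicity, i.e., there exists an R-regular sequence x₁, …, x_d ∈ m with m² = (x₁, …, x_d)m. Let M and N be finitely generated R-modules and set t = depth_R M. If Tor_i^R(M, N) = 0 for some d+1 consecutive values of i with all these values ≥ d − t + 2, then either pd_R M < ∞ or pd_R N < ∞, and moreover Tor_i^R(M, N) = 0 for all i ≥ d − t + 1. -/
open CategoryTheory IsLocalRing

section Prelim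

variable (R : Type) [CommRing R]

/-- `Tor_i^R(M, N) = 0`. -/
noncomputable def TorVanish (M N : Type) [AddCommGroup M] [Module R M]
    [AddCommGroup N] [Module R N] (i : ℕ) : Prop :=
  Subsingleton (((Tor (ModuleCat R) i).obj (ModuleCat.of R M)).obj (ModuleCat.of R N))

/-- `Ext_R^i(M, N) = 0`. -/
noncomputable def ExtVanish (M N : Type) [AddCommGroup M] [Module R M]
    [AddCommGroup N] [Module R N] (i : ℕ) : Prop :=
  Subsingleton (((Ext R (ModuleCat R) i).obj (Opposite.op (ModuleCat.of R M))).obj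
    (ModuleCat.of R N))

/-- `pd_R M < n`, expressed by the standard characterization
`Ext_R^i(M, -) = 0` for all `i ≥ n`. -/
def ProjDimLT (M : Type) [AddCommGroup M] [Module R M] (n : ℕ) : Prop :=
  ∀ (N : ModuleCat R) (i : ℕ), n ≤ i → ExtVanish R M N i

/-- `pd_R M < ∞`. -/
def ProjDimFinite (M : Type) [AddCommGroup M] [Module R M] : Prop :=
  ∃ n, ProjDimLT R M n

/-- `id_R M < n`, expressed by the standard characterization
`Ext_R^i(-, M) = 0` for all `i ≥ n`. -/
def InjDimLT (M : Type) [AddCommGroup M] [Module R M] (n : ℕ) : Prop :=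
  ∀ (N : ModuleCat R) (i : ℕ), n ≤ i → ExtVanish R N M i

/-- `id_R M < ∞`. -/
def InjDimFinite (M : Type) [AddCommGroup M] [Module R M] : Prop :=
  ∃ n, InjDimLT R M n

/-- `M` is a Tor-rigid `R`-module. -/
def TorRigid (M : Type) [AddCommGroup M] [Module R M] : Prop :=
  ∀ (N : ModuleCat R), Module.Finite R N → ∀ n : ℕ, 1 ≤ n → TorVanish R M N n →
    ∀ i : ℕ, n ≤ i → TorVanish R M N i

variable [IsLocalRing R]

/-- The depth of `M`: the supremum of lengths of `M`-regular sequences contained in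
the maximal ideal. -/
noncomputable def depth (M : Type) [AddCommGroup M] [Module R M] : ℕ∞ :=
  sSup {n : ℕ∞ | ∃ rs : List R, (∀ x ∈ rs, x ∈ maximalIdeal R) ∧
    RingTheory.Sequence.IsRegular M rs ∧ (rs.length : ℕ∞) = n}

/-- The dimension of a module, i.e. the Krull dimension of `R ⧸ ann M`. -/
noncomputable def moduleDim (M : Type) [AddCommGroup M] [Module R M] : WithBot ℕ∞ :=
  ringKrullDim (R ⧸ Module.annihilator R M)

/-- `M` is an Ulrich `R`-module of dimension `s` : `M` is nonzero, Cohen–Macaulay of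
dimension `s`, and there is an `M`-regular sequence `x₁, …, x_s` in the maximal ideal
with `mM = (x₁, …, x_s)M`. -/
def IsUlrich (M : Type) [AddCommGroup M] [Module R M] (s : ℕ) : Prop :=
  Nontrivial M ∧ moduleDim R M = (s : ℕ∞) ∧ depth R M = (s : ℕ∞) ∧
  ∃ rs : List R, rs.length = s ∧ (∀ x ∈ rs, x ∈ maximalIdeal R) ∧
    RingTheory.Sequence.IsRegular M rs ∧
    (maximalIdeal R) • (⊤ : Submodule R M) = (Ideal.ofList rs) • ⊤

/-- `R` is a regular local ring: the maximal ideal is generated by `dim R` elements. -/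
def IsRegularLocal : Prop :=
  ∃ s : Finset R, Ideal.span (s : Set R) = maximalIdeal R ∧
    (s.card : WithBot ℕ∞) = ringKrullDim R

/-- `R` (of dimension `d`) has minimal multiplicity: there is an `R`-regular sequence
`x₁, …, x_d` in the maximal ideal `m` with `m² = (x₁, …, x_d)m`. -/
def HasMinimalMultiplicity (d : ℕ) : Prop :=
  ∃ rs : List R, rs.length = d ∧ (∀ x ∈ rs, x ∈ maximalIdeal R) ∧
    RingTheory.Sequence.IsWeaklyRegular R rs ∧
    maximalIdeal R ^ 2 = Ideal.ofList rs * maximalIdeal R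

/-- The `n`-th Betti number of `M` over the local ring `R`, i.e. the dimension over the
residue field `k = R ⧸ m` of `Tor_n^R(M, k)` (which is an `m`-torsion module, so we take
the dimension of its reduction mod `m`). -/
noncomputable def betti (M : Type) [AddCommGroup M] [Module R M] (n : ℕ) : ℕ :=
  Module.finrank (R ⧸ maximalIdeal R)
    ((((Tor (ModuleCat R) n).obj (ModuleCat.of R M)).obj
        (ModuleCat.of R (R ⧸ maximalIdeal R))) ⧸
      (maximalIdeal R • (⊤ : Submodule R
        (((Tor (ModuleCat R) n).obj (ModuleCat.of R M)).obj
          (ModuleCat.of R (R ⧸ maximalIdeal R))))))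

end Prelim


open CategoryTheory IsLocalRing
set_option linter.unusedSectionVars false

/-- there is a weakly regular sequence of length n in the maximal ideal -/
def DGE (R : Type) [CommRing R] [IsLocalRing R] (n : ℕ) (M : Type) [AddCommGroup M] [Module R M] : Prop :=
  ∃ rs : List R, rs.length = n ∧ (∀ r ∈ rs, r ∈ maximalIdeal R) ∧
    RingTheory.Sequence.IsWeaklyRegular M rs

section
variable {R : Type} [CommRing R] [IsLocalRing R] [IsNoetherianRing R]

theorem dge_iff_ext (n : ℕ) (M : Type) [AddCommGroup M] [Module R M] [Module.Finite R M] :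
    DGE R n M ↔ ∀ i < n, Subsingleton
      (Abelian.Ext (ModuleCat.of R (Shrink.{0} (R ⧸ maximalIdeal R))) (ModuleCat.of R M) i) := by
  rcases subsingleton_or_nontrivial M with h | h
  · constructor
    · intro _ i _
      have hz : Limits.IsZero (ModuleCat.of R M) := ModuleCat.isZero_of_subsingleton _
      refine ⟨fun a b => ?_⟩
      rw [← Abelian.Ext.comp_mk₀_id a, ← Abelian.Ext.comp_mk₀_id b, hz.eq_of_src (𝟙 _) 0]
      simp
    · intro _
      refine ⟨List.replicate n 0, by simp, ?_, ?_⟩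
      · intro r hr; rw [List.eq_of_mem_replicate hr]; exact zero_mem _
      · induction n generalizing M with
        | zero => simp
        | succ n ih =>
          rw [List.replicate_succ, RingTheory.Sequence.isWeaklyRegular_cons_iff]
          refine ⟨Function.injective_of_subsingleton _, ih _ ?_ ?_⟩
          · infer_instance
          · intro i _
            have hz : Limits.IsZero (ModuleCat.of R (QuotSMulTop (0:R) M)) := ModuleCat.isZero_of_subsingleton _
            refine ⟨fun a b => ?_⟩
            rw [← Abelian.Ext.comp_mk₀_id a, ← Abelian.Ext.comp_mk₀_id b, hz.eq_of_src (𝟙 _) 0]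
            simp
  · have hlt : (maximalIdeal R) • (⊤ : Submodule R (ModuleCat.of R M)) < ⊤ := by
      rw [lt_top_iff_ne_top]
      exact (Submodule.top_ne_ideal_smul_of_le_jacobson_annihilator
        (IsLocalRing.maximalIdeal_le_jacobson _)).symm
    have := (ModuleCat.exists_isRegular_tfae (maximalIdeal R) n (ModuleCat.of R M) hlt).out 1 3
    rw [this]
    constructor
    · rintro ⟨rs, h1, h2, h3⟩
      exact ⟨rs, h1, h2, (IsLocalRing.isRegular_iff_isWeaklyRegular_of_subset_maximalIdeal h2).2 h3⟩
    · rintro ⟨rs, h1, h2, h3⟩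
      exact ⟨rs, h1, h2, h3.toIsWeaklyRegular⟩

theorem DGE.mono {n m : ℕ} {M : Type} [AddCommGroup M] [Module R M] (h : DGE R n M) (hm : m ≤ n) :
    DGE R m M := by
  obtain ⟨rs, h1, h2, h3⟩ := h
  refine ⟨rs.take m, by simp [h1, hm], fun r hr => h2 r (List.mem_of_mem_take hr), ?_⟩
  rw [← List.take_append_drop m rs, RingTheory.Sequence.isWeaklyRegular_append_iff] at h3
  exact h3.1

/-- short exact sequence of modules -/
def sesMod {A B C : Type} [AddCommGroup A] [Module R A] [AddCommGroup B] [Module R B]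
    [AddCommGroup C] [Module R C] (f : A →ₗ[R] B) (g : B →ₗ[R] C) (hfg : Function.Exact f g) :
    ShortComplex (ModuleCat R) :=
  ShortComplex.mk (ModuleCat.ofHom f) (ModuleCat.ofHom g) (by
    ext x; exact hfg.apply_apply_eq_zero x)

theorem sesMod_shortExact {A B C : Type} [AddCommGroup A] [Module R A] [AddCommGroup B] [Module R B]
    [AddCommGroup C] [Module R C] (f : A →ₗ[R] B) (g : B →ₗ[R] C) (hfg : Function.Exact f g)
    (hf : Function.Injective f) (hg : Function.Surjective g) : (sesMod f g hfg).ShortExact where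
  exact := (ShortComplex.ShortExact.moduleCat_exact_iff_function_exact _).2 hfg
  mono_f := (ModuleCat.mono_iff_injective _).2 hf
  epi_g := (ModuleCat.epi_iff_surjective _).2 hg

section
variable {A B C : Type} [AddCommGroup A] [Module R A] [AddCommGroup B] [Module R B]
    [AddCommGroup C] [Module R C] (f : A →ₗ[R] B) (g : B →ₗ[R] C) (hfg : Function.Exact f g)
    (hf : Function.Injective f) (hg : Function.Surjective g)
include hfg hf hg

theorem dge_left [Module.Finite R A] [Module.Finite R B] [Module.Finite R C]
    {n : ℕ} (hB : DGE R (n + 1) B) (hC : DGE R n C) : DGE R (n + 1) A := by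
  rw [dge_iff_ext] at *
  have hS := sesMod_shortExact f g hfg hf hg
  intro i hi
  cases i with
  | zero =>
    refine ⟨fun a b => ?_⟩
    have := hS.mono_f
    have := hB 0 (by omega)
    have hi := Abelian.Ext.mk₀_homEquiv₀_apply a
    have hj := Abelian.Ext.mk₀_homEquiv₀_apply b
    rw [← hi, ← hj]
    congr 1
    apply (cancel_mono (sesMod f g hfg).f).1
    apply Abelian.Ext.homEquiv₀.symm.injective
    exact Subsingleton.elim (α := Abelian.Ext (ModuleCat.of R (Shrink.{0} (R ⧸ maximalIdeal R))) (ModuleCat.of R B) 0) _ _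
  | succ i =>
    suffices ∀ a : Abelian.Ext (ModuleCat.of R (Shrink.{0} (R ⧸ maximalIdeal R))) (ModuleCat.of R A) (i+1), a = 0 from
      ⟨fun a b => by rw [this a, this b]⟩
    intro a
    have h1 := hB (i+1) (by omega)
    have h2 := hC i (by omega)
    obtain ⟨c, hc⟩ := Abelian.Ext.covariant_sequence_exact₁ _ hS (n₀ := i) (n₁ := i+1) a
      (Subsingleton.elim (α := Abelian.Ext (ModuleCat.of R (Shrink.{0} (R ⧸ maximalIdeal R))) (ModuleCat.of R B) (i+1)) _ _) rfl
    have : c = 0 := Subsingleton.elim (α := Abelian.Ext (ModuleCat.of R (Shrink.{0} (R ⧸ maximalIdeal R))) (ModuleCat.of R C) i) _ _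
    rw [← hc, this, Abelian.Ext.zero_comp]; rfl

theorem dge_right [Module.Finite R A] [Module.Finite R B] [Module.Finite R C]
    {n : ℕ} (hB : DGE R n B) (hA : DGE R (n + 1) A) : DGE R n C := by
  rw [dge_iff_ext] at *
  have hS := sesMod_shortExact f g hfg hf hg
  intro i hi
  suffices ∀ a : Abelian.Ext (ModuleCat.of R (Shrink.{0} (R ⧸ maximalIdeal R))) (ModuleCat.of R C) i, a = 0 from
      ⟨fun a b => by rw [this a, this b]⟩
  intro a
  have h1 := hB i (by omega)
  have h2 := hA (i+1) (by omega)
  obtain ⟨c, hc⟩ := Abelian.Ext.covariant_sequence_exact₃ _ hS (n₀ := i) (n₁ := i+1) a rfl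
      (Subsingleton.elim (α := Abelian.Ext (ModuleCat.of R (Shrink.{0} (R ⧸ maximalIdeal R))) (ModuleCat.of R A) (i+1)) _ _)
  have : c = 0 := Subsingleton.elim (α := Abelian.Ext (ModuleCat.of R (Shrink.{0} (R ⧸ maximalIdeal R))) (ModuleCat.of R B) i) _ _
  rw [← hc, this, Abelian.Ext.zero_comp]; rfl
end

theorem dge_quot {M : Type} [AddCommGroup M] [Module R M] [Module.Finite R M] {n : ℕ}
    (h : DGE R (n+1) M) (s : R) (hs : IsSMulRegular M s) : DGE R n (QuotSMulTop s M) := by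
  refine dge_right (LinearMap.lsmul R M s) (Submodule.mkQ _) ?_ hs (Submodule.mkQ_surjective _)
    (h.mono (by omega)) h
  intro x
  rw [Submodule.mkQ_apply, Submodule.Quotient.mk_eq_zero, Submodule.mem_smul_pointwise_iff_exists]
  simp

theorem DGE.free {n : ℕ} (h : DGE R n R) (F : Type) [AddCommGroup F] [Module R F] [Module.Free R F] :
    DGE R n F := by
  obtain ⟨rs, h1, h2, h3⟩ := h
  refine ⟨rs, h1, h2, ?_⟩
  have := h3.isWeaklyRegular_lTensor (M₂ := F)
  exact ((TensorProduct.rid R F).isWeaklyRegular_congr rs).1 this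

end

open CategoryTheory IsLocalRing
open scoped Pointwise
set_option linter.unusedSectionVars false

section
variable {R : Type} [CommRing R] [IsLocalRing R] [IsNoetherianRing R]

theorem ass_coheight (n : ℕ) (X : Type) [AddCommGroup X] [Module R X] [Module.Finite R X]
    (h : DGE R n X) (q : PrimeSpectrum R) (hq : q.asIdeal ∈ associatedPrimes R X) :
    (n : ℕ∞) ≤ Order.coheight q := by
  induction n generalizing X q with
  | zero => simp
  | succ n ih =>
    obtain ⟨rs, h1, h2, h3⟩ := id h
    cases rs with
    | nil => simp at h1
    | cons x rs =>
    rw [RingTheory.Sequence.isWeaklyRegular_cons_iff] at h3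
    have hx : x ∈ maximalIdeal R := h2 x (by simp)
    have hd := dge_quot h x h3.1
    -- U
    let U : Submodule R X := Submodule.torsionBySet R X q.asIdeal
    have hUx : ¬ U ≤ x • (⊤ : Submodule R X) := by
      intro hle
      have hU : U ≤ x • U := by
        intro u hu
        obtain ⟨v, -, rfl⟩ := (Submodule.mem_smul_pointwise_iff_exists _ _ _).1 (hle hu)
        refine Submodule.smul_mem_pointwise_smul _ _ _ ?_
        rw [Submodule.mem_torsionBySet_iff] at hu ⊢
        intro a
        apply h3.1
        have := hu a
        simp only [smul_zero]
        rw [smul_comm]; exact this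
      have hbot : U = ⊥ := by
        refine Submodule.eq_bot_of_le_smul_of_le_jacobson_bot (maximalIdeal R) U
          (IsNoetherian.noetherian _) ?_ (IsLocalRing.maximalIdeal_le_jacobson _)
        refine hU.trans ?_
        rw [← Submodule.ideal_span_singleton_smul]
        exact Submodule.smul_mono_left ((Ideal.span_singleton_le_iff_mem _).2 hx)
      obtain ⟨hp, y, hy⟩ := isAssociatedPrime_iff.1 hq
      have : y ∈ U := by
        rw [Submodule.mem_torsionBySet_iff]
        rintro ⟨a, ha⟩
        rw [SetLike.mem_coe, hy] at ha
        simpa using ha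
      rw [hbot, Submodule.mem_bot] at this
      apply hp.ne_top
      rw [hy, this, Ideal.eq_top_iff_one]
      simp
    obtain ⟨u, huU, hu⟩ := Set.not_subset.1 hUx
    obtain ⟨q', hq', hle⟩ := exists_le_isAssociatedPrime_of_isNoetherianRing R
      (Submodule.mkQ (x • (⊤ : Submodule R X)) u) (fun h0 => hu ((Submodule.Quotient.mk_eq_zero _).1 h0))
    have hqq : q < ⟨q', hq'.1⟩ := by
      constructor
      · intro a ha
        apply hle
        have := (Submodule.mem_torsionBySet_iff _ _).1 huU ⟨a, ha⟩
        simp only at this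
        simp [← map_smul, -Submodule.mkQ_apply, this]
      · intro hge
        have hxq : x ∈ q.asIdeal := by
          apply hge
          apply hle
          rw [Submodule.mem_colon_singleton, ← map_smul]
          exact (Submodule.Quotient.mk_eq_zero _).2 (Submodule.smul_mem_pointwise_smul _ _ _ trivial)
        have : x ∈ ⋃ p ∈ associatedPrimes R X, (p : Set R) := Set.mem_biUnion hq hxq
        rw [biUnion_associatedPrimes_eq_compl_regular] at this
        exact this h3.1
    have := ih _ hd ⟨q', hq'.1⟩ hq'
    calc ((n+1 : ℕ) : ℕ∞) = n + 1 := by simp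
      _ ≤ Order.coheight (⟨q', hq'.1⟩ : PrimeSpectrum R) + 1 := by gcongr
      _ ≤ _ := Order.coheight_add_one_le hqq

theorem ass_minimal (d : ℕ) (hR : ringKrullDim R ≤ d) (X : Type) [AddCommGroup X] [Module R X]
    [Module.Finite R X] (h : DGE R d X) (q : Ideal R) (hq : q ∈ associatedPrimes R X) :
    q ∈ minimalPrimes R := by
  have hp : q.IsPrime := hq.1
  obtain ⟨p, hpm, hpq⟩ := Ideal.exists_minimalPrimes_le (bot_le : ⊥ ≤ q)
  have hpp : p.IsPrime := hpm.1.1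
  rcases hpq.eq_or_lt with rfl | hlt
  · exact hpm
  · exfalso
    have h1 := ass_coheight d X h ⟨q, hp⟩ hq
    have h2 : Order.coheight (⟨q, hp⟩ : PrimeSpectrum R) + 1 ≤ Order.coheight (⟨p, hpp⟩ : PrimeSpectrum R) :=
      Order.coheight_add_one_le hlt
    have h3 : ((Order.coheight (⟨p, hpp⟩ : PrimeSpectrum R) : ℕ∞) : WithBot ℕ∞) ≤ d :=
      (Order.coheight_le_krullDim _).trans hR
    have h4 : Order.coheight (⟨p, hpp⟩ : PrimeSpectrum R) ≤ (d : ℕ∞) := by exact_mod_cast h3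
    have h5 : ((d + 1 : ℕ) : ℕ∞) ≤ d := by
      push_cast
      calc (d : ℕ∞) + 1 ≤ _ := by gcongr
        _ ≤ _ := h2
        _ ≤ _ := h4
    have : d + 1 ≤ d := by exact_mod_cast h5
    omega

theorem reg_transfer (d : ℕ) (hR : ringKrullDim R ≤ d) (X : Type) [AddCommGroup X] [Module R X]
    [Module.Finite R X] (h : DGE R d X) (s : R) (hs : IsSMulRegular R s) : IsSMulRegular X s := by
  by_contra hc
  have : s ∈ ⋃ p ∈ associatedPrimes R X, (p : Set R) := by
    rw [biUnion_associatedPrimes_eq_compl_regular]; exact hc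
  obtain ⟨p, hp, hsp⟩ := Set.mem_iUnion₂.1 this
  have hm := ass_minimal d hR X h p hp
  have hpa : p ∈ associatedPrimes R R := by
    apply Module.associatedPrimes.minimalPrimes_annihilator_subset_associatedPrimes
    rwa [show Module.annihilator R R = ⊥ from Module.annihilator_eq_bot.2 inferInstance]
  have : s ∈ ⋃ p ∈ associatedPrimes R R, (p : Set R) := Set.mem_biUnion hpa hsp
  rw [biUnion_associatedPrimes_eq_compl_regular] at this
  exact this hs

end

theorem DGE.quotRing {R : Type} [CommRing R] [IsLocalRing R] (S : Type) [CommRing S] [IsLocalRing S] [Algebra R S]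
    [IsLocalHom (algebraMap R S)] (Y : Type) [AddCommGroup Y]
    [Module R Y] [Module S Y] [IsScalarTower R S Y] {n : ℕ} (h : DGE R n Y) : DGE S n Y := by
  obtain ⟨rs, h1, h2, h3⟩ := h
  refine ⟨rs.map (algebraMap R S), by simpa, ?_, (RingTheory.Sequence.isWeaklyRegular_map_algebraMap_iff S Y rs).2 h3⟩
  intro r hr
  obtain ⟨a, ha, rfl⟩ := List.mem_map.1 hr
  exact (IsLocalRing.mem_maximalIdeal _).2 (map_mem_nonunits_iff _ _ |>.2 (h2 a ha))

theorem quot_local {R : Type} [CommRing R] [IsLocalRing R] (s : R) (hs : s ∈ maximalIdeal R) :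
    ∃ _ : IsLocalRing (R ⧸ Ideal.span {s}), IsLocalHom (algebraMap R (R ⧸ Ideal.span {s})) := by
  have hne : Ideal.span {s} ≠ ⊤ := by
    intro h
    rw [Ideal.span_singleton_eq_top] at h
    exact hs h
  have : Nontrivial (R ⧸ Ideal.span {s}) := Ideal.Quotient.nontrivial_iff.2 hne
  refine ⟨IsLocalRing.of_surjective' (Ideal.Quotient.mk _) Ideal.Quotient.mk_surjective, ?_⟩
  exact IsLocalHom.of_surjective _ Ideal.Quotient.mk_surjective

theorem quot_dim {R : Type} [CommRing R] [IsLocalRing R] [IsNoetherianRing R] (s : R) (hs : s ∈ maximalIdeal R)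
    (hreg : IsSMulRegular R s) (d : ℕ) (hR : ringKrullDim R ≤ d) :
    ∃ d', d = d' + 1 ∧ ringKrullDim (R ⧸ Ideal.span {s}) ≤ d' := by
  have h := ringKrullDim_quotient_span_singleton_succ_eq_ringKrullDim hreg hs
  obtain ⟨h1, -⟩ := quot_local s hs
  have h0 : 0 ≤ ringKrullDim (R ⧸ Ideal.span {s}) := ringKrullDim_nonneg_of_nontrivial
  rw [← h] at hR
  generalize ringKrullDim (R ⧸ Ideal.span {s}) = e at *
  cases e with
  | bot => simp at h0
  | coe e =>
    have hR' : e + 1 ≤ (d : ℕ∞) := by exact_mod_cast hR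
    cases e with
    | top => simp at hR'
    | coe e =>
      have : e + 1 ≤ d := by exact_mod_cast hR'
      refine ⟨d - 1, by omega, ?_⟩
      have : e ≤ d - 1 := by omega
      have h' : (e : ℕ∞) ≤ ((d - 1 : ℕ) : ℕ∞) := Nat.cast_le.2 this
      exact WithBot.coe_le_coe.2 h'

theorem weaklyRegular_transfer (n : ℕ) : ∀ (R : Type) [CommRing R] [IsLocalRing R] [IsNoetherianRing R]
    (rs : List R) (_ : rs.length = n) (_ : ∀ r ∈ rs, r ∈ maximalIdeal R)
    (_ : RingTheory.Sequence.IsWeaklyRegular R rs)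
    (d : ℕ) (_ : ringKrullDim R ≤ d) (X : Type) [AddCommGroup X] [Module R X]
    [Module.Finite R X] (_ : DGE R d X), RingTheory.Sequence.IsWeaklyRegular X rs := by
  induction n with
  | zero =>
    intro R _ _ _ rs hl _ _ d _ X _ _ _ _
    obtain rfl := List.length_eq_zero_iff.1 hl
    simp
  | succ n ih =>
    intro R _ _ _ rs hl hm hreg d hR X _ _ _ hX
    cases rs with
    | nil => simp at hl
    | cons s rs =>
    rw [RingTheory.Sequence.isWeaklyRegular_cons_iff] at hreg
    have hs : s ∈ maximalIdeal R := hm s (by simp)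
    have hsX := reg_transfer d hR X hX s hreg.1
    obtain ⟨d', rfl, hd'⟩ := quot_dim s hs hreg.1 d hR
    obtain ⟨hloc, hlh⟩ := quot_local s hs
    have hX' := dge_quot hX s hsX
    have hX'' : DGE (R ⧸ Ideal.span {s}) d' (QuotSMulTop s X) := hX'.quotRing _ _
    refine (RingTheory.Sequence.isWeaklyRegular_cons_iff' X s rs).2 ⟨hsX, ?_⟩
    have : Module.Finite (R ⧸ Ideal.span {s}) (QuotSMulTop s X) :=
      Module.Finite.of_restrictScalars_finite R _ _
    refine ih (R ⧸ Ideal.span {s}) _ (by simpa using hl) ?_ ?_ d' hd' _ hX''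
    · intro r hr
      obtain ⟨a, ha, rfl⟩ := List.mem_map.1 hr
      exact (IsLocalRing.mem_maximalIdeal _).2
        ((map_mem_nonunits_iff (algebraMap R (R ⧸ Ideal.span {s})) _).2 (hm a (by simp [ha])))
    · refine (RingTheory.Sequence.isWeaklyRegular_map_algebraMap_iff (R ⧸ Ideal.span {s}) _ rs).2 ?_
      refine (LinearEquiv.isWeaklyRegular_congr (Submodule.quotEquivOfEq _ _ ?_) rs).1 hreg.2
      simp [← Submodule.ideal_span_singleton_smul]

open CategoryTheory IsLocalRing
open scoped Pointwise TensorProduct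

inductive FFR (R : Type) [CommRing R] : ∀ (N : Type) [AddCommGroup N] [Module R N], Prop
  | free (N : Type) [AddCommGroup N] [Module R N] [Module.Free R N] [Module.Finite R N] : FFR R N
  | step (K F N : Type) [AddCommGroup K] [Module R K] [AddCommGroup F] [Module R F]
      [AddCommGroup N] [Module R N] [Module.Free R F] [Module.Finite R F]
      (i : K →ₗ[R] F) (f : F →ₗ[R] N) (hi : Function.Injective i) (h : Function.Exact i f)
      (hf : Function.Surjective f) (hK : FFR R K) : FFR R N

theorem FFR.finite {R : Type} [CommRing R] {N : Type} [AddCommGroup N] [Module R N] (h : FFR R N) :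
    Module.Finite R N := by
  induction h with
  | free N => assumption
  | step K F N i f hi h hf hK ih => exact Module.Finite.of_surjective f hf

theorem FFR.flat {R : Type} [CommRing R] (A : Type) [CommRing A] [Algebra R A] [Module.Flat R A]
    {N : Type} [AddCommGroup N] [Module R N] (h : FFR R N) :
    FFR A (A ⊗[R] N) := by
  induction h with
  | free N => exact FFR.free _
  | step K F N i f hi h hf hK ih =>
    refine FFR.step (A ⊗[R] K) (A ⊗[R] F) (A ⊗[R] N) (i.baseChange A) (f.baseChange A) ?_ ?_ ?_ ih
    · exact Module.Flat.lTensor_preserves_injective_linearMap i hi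
    · exact lTensor_exact A h hf
    · exact LinearMap.lTensor_surjective A hf

theorem quot_inj {R : Type} [CommRing R] {K F N : Type} [AddCommGroup K] [Module R K] [AddCommGroup F] [Module R F]
      [AddCommGroup N] [Module R N] 
      (i : K →ₗ[R] F) (f : F →ₗ[R] N) (hi : Function.Injective i) (h : Function.Exact i f)
      (s : R) (hs : IsSMulRegular N s) :
      Function.Injective (i.lTensor (R ⧸ Ideal.span {s})) := by
  have h0 : Function.Exact (0 : K →ₗ[R] K) i := by
    intro x
    constructor
    · intro hx; exact ⟨0, by simpa using (hi (by simpa using hx)).symm⟩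
    · rintro ⟨y, rfl⟩; simp
  have h1 := QuotSMulTop.map_first_exact_on_four_term_exact_of_isSMulRegular_last h0 h hs
  have h2 : Function.Injective (QuotSMulTop.map s i) := by
    rw [injective_iff_map_eq_zero]
    intro x hx
    obtain ⟨y, rfl⟩ := (h1 x).1 hx
    simp
  have h3 := QuotSMulTop.equivQuotTensor_naturality s i
  intro x y hxy
  obtain ⟨x, rfl⟩ := (QuotSMulTop.equivQuotTensor s K).surjective x
  obtain ⟨y, rfl⟩ := (QuotSMulTop.equivQuotTensor s K).surjective y
  have hx := LinearMap.congr_fun h3 x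
  have hy := LinearMap.congr_fun h3 y
  simp only [LinearMap.comp_apply, LinearEquiv.coe_coe] at hx hy
  rw [← hx, ← hy] at hxy
  rw [h2 ((QuotSMulTop.equivQuotTensor s F).injective hxy)]

theorem isSMulRegular_free {R : Type} [CommRing R] {F : Type} [AddCommGroup F] [Module R F]
    [Module.Free R F] {s : R} (hs : IsSMulRegular R s) : IsSMulRegular F s := by
  have e := (Module.Free.chooseBasis R F).repr
  rw [e.isSMulRegular_congr]
  intro x y hxy
  ext i
  exact hs (by simpa using DFunLike.congr_fun hxy i)

theorem FFR.quot {R : Type} [CommRing R] (s : R) (hR : IsSMulRegular R s)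
    {N : Type} [AddCommGroup N] [Module R N] (h : FFR R N) (hN : IsSMulRegular N s) :
    FFR (R ⧸ Ideal.span {s}) ((R ⧸ Ideal.span {s}) ⊗[R] N) := by
  induction h with
  | free N => exact FFR.free _
  | step K F N i f hi h hf hK ih =>
    refine FFR.step ((R ⧸ Ideal.span {s}) ⊗[R] K) ((R ⧸ Ideal.span {s}) ⊗[R] F) _ (i.baseChange _) (f.baseChange _) ?_ ?_ ?_ 
      (ih ((isSMulRegular_free (F := F) hR).of_injective i hi))
    · exact quot_inj i f hi h s hN
    · exact lTensor_exact _ h hf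
    · exact LinearMap.lTensor_surjective _ hf

theorem FFR.free_of_ann {A : Type} [CommRing A] [IsLocalRing A] (r : A)
    (hr : ∀ x, x ∈ maximalIdeal A ↔ x * r = 0) {N : Type} [AddCommGroup N] [Module A N] (h : FFR A N) :
    Module.Free A N := by
  induction h with
  | free N => assumption
  | step K F N i f hi h hf hK ih =>
    have := hK.finite
    refine Module.free_of_lTensor_residueField_injective i f hf h ?_
    rw [injective_iff_map_eq_zero]
    intro x hx
    obtain ⟨y, rfl⟩ := TensorProduct.mk_surjective A K (ResidueField A) IsLocalRing.residue_surjective x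
    have key : ∀ (Q : Type) [AddCommGroup Q] [Module A Q] (y : Q),
        TensorProduct.mk A (ResidueField A) Q 1 y = 0 ↔ y ∈ maximalIdeal A • (⊤ : Submodule A Q) := by
      intro Q _ _ y
      have := LinearMap.ker_tensorProductMk (I := maximalIdeal A) (Q := Q)
      rw [← this]; rfl
    rw [key]
    have h1 : i y ∈ maximalIdeal A • (⊤ : Submodule A F) := by
      rw [← key]; exact hx
    have h2 : r • i y = 0 := by
      refine Submodule.smul_induction_on h1 ?_ ?_
      · intro a ha n _
        rw [smul_smul, mul_comm, (hr a).1 ha, zero_smul]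
      · intro a b ha hb
        rw [smul_add, ha, hb, add_zero]
    have h3 : r • y = 0 := hi (by rw [map_smul, h2, map_zero])
    let b := Module.Free.chooseBasis A K
    rw [← b.linearCombination_repr y, Finsupp.linearCombination_apply]
    refine Submodule.sum_mem _ fun j _ => Submodule.smul_mem_smul ?_ trivial
    rw [hr]
    have := congrArg (fun z => b.repr z j) h3
    simpa [mul_comm] using this

theorem kill {R : Type} [CommRing R] [IsLocalRing R] [IsNoetherianRing R] {K F N : Type} [AddCommGroup K] [Module R K] [AddCommGroup F] [Module R F]
      [AddCommGroup N] [Module R N] [Module.Free R F] [Module.Finite R F]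
      (i : K →ₗ[R] F) (f : F →ₗ[R] N) (hi : Function.Injective i) (h : Function.Exact i f)
      (hf : Function.Surjective f) (hK : FFR R K) (X : Type) [AddCommGroup X] [Module R X]
      (q : Ideal R) (hq : q ∈ associatedPrimes R R) (t : X ⊗[R] K) (ht : i.lTensor X t = 0) :
      ∃ u ∉ q, u • t = 0 := by
  have := hq.1
  let A := Localization.AtPrime q
  have hA : maximalIdeal A ∈ associatedPrimes A A := by
    apply Module.associatedPrimes.mem_associatedPrimes_of_comap_mem_associatedPrimes_of_isLocalizedModule
      q.primeCompl (Algebra.linearMap R A)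
    simpa [A, Localization.AtPrime.under_maximalIdeal] using hq
  have : IsNoetherianRing A := IsLocalization.isNoetherianRing q.primeCompl A inferInstance
  obtain ⟨r, hr⟩ := (isAssociatedPrime_iff.1 hA).2
  have hN : FFR R N := FFR.step K F N i f hi h hf hK
  have hfree : Module.Free A (A ⊗[R] N) := (hN.flat A).free_of_ann r (by
    intro x; rw [hr, Submodule.mem_colon_singleton]; simp)
  have hi' : Function.Injective (i.baseChange A) := Module.Flat.lTensor_preserves_injective_linearMap i hi
  have hf' : Function.Surjective (f.baseChange A) := LinearMap.lTensor_surjective A hf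
  have h' : Function.Exact (i.baseChange A) (f.baseChange A) := lTensor_exact A h hf
  obtain ⟨l, hl⟩ := ((h'.split_tfae hi' hf').out 0 1).1 (Module.projective_lifting_property _ _ hf')
  have hinj : Function.Injective ((i.lTensor A).lTensor X) := by
    apply Function.LeftInverse.injective (g := (l.restrictScalars R).lTensor X)
    intro x
    rw [← LinearMap.lTensor_comp_apply]
    have : (l.restrictScalars R) ∘ₗ (i.lTensor A) = LinearMap.id := by
      ext x; exact LinearMap.congr_fun hl _
    rw [this]; simp
  have hz : TensorProduct.mk R A (X ⊗[R] K) 1 t = 0 := by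
    apply (TensorProduct.leftComm R A X K).injective
    apply hinj
    have : ((i.lTensor A).lTensor X) ∘ₗ (TensorProduct.leftComm R A X K).toLinearMap =
      (TensorProduct.leftComm R A X F).toLinearMap ∘ₗ ((i.lTensor X).lTensor A) := by
      ext; simp
    have h2 := LinearMap.congr_fun this (TensorProduct.mk R A (X ⊗[R] K) 1 t)
    simp only [LinearMap.comp_apply, LinearEquiv.coe_coe] at h2
    rw [h2]
    simp [ht]
  rw [IsLocalizedModule.eq_zero_iff q.primeCompl] at hz
  obtain ⟨c, hc⟩ := hz
  exact ⟨c, c.2, hc⟩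

theorem exists_reg_kill {R : Type} [CommRing R] [IsLocalRing R] [IsNoetherianRing R] {K F N : Type} [AddCommGroup K] [Module R K] [AddCommGroup F] [Module R F]
      [AddCommGroup N] [Module R N] [Module.Free R F] [Module.Finite R F]
      (i : K →ₗ[R] F) (f : F →ₗ[R] N) (hi : Function.Injective i) (h : Function.Exact i f)
      (hf : Function.Surjective f) (hK : FFR R K) (X : Type) [AddCommGroup X] [Module R X] [Module.Finite R X] :
      ∃ s : R, IsSMulRegular R s ∧ ∀ t, i.lTensor X t = 0 → s • t = 0 := by
  have := hK.finite
  let T := LinearMap.ker (i.lTensor X)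
  have hT : Module.Finite R T := inferInstance
  have h1 : ∀ q ∈ associatedPrimes R R, ¬ Module.annihilator R T ≤ q := by
    intro q hq hle
    have := hq.1
    have h2 : (⟨q, hq.1⟩ : PrimeSpectrum R) ∈ Module.support R T := Module.mem_support_iff_of_finite.2 hle
    revert h2
    rw [imp_false, Module.notMem_support_iff']
    rintro ⟨t, ht⟩
    obtain ⟨u, hu, h⟩ := kill i f hi h hf hK X q hq t ht
    exact ⟨u, hu, Subtype.ext h⟩
  have h3 : ¬ ((Module.annihilator R T : Ideal R) : Set R) ⊆ ⋃ q ∈ associatedPrimes R R, (q : Set R) := by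
    intro hs
    obtain ⟨q, hq, hle⟩ := (Ideal.subset_union_prime_finite (associatedPrimes.finite R R) (f := id) ⊥ ⊥ (by
      intro q hq _ _; exact hq.1)).1 hs
    exact h1 q hq hle
  obtain ⟨s, hs, hs'⟩ := Set.not_subset.1 h3
  rw [biUnion_associatedPrimes_eq_compl_regular] at hs'
  refine ⟨s, not_not.1 hs', fun t ht => ?_⟩
  exact congrArg Subtype.val (Module.mem_annihilator.1 hs ⟨t, ht⟩)

open CategoryTheory IsLocalRing
open scoped Pointwise TensorProduct

theorem DGE.congr {R : Type} [CommRing R] [IsLocalRing R] {n : ℕ} {X Y : Type} [AddCommGroup X] [Module R X]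
    [AddCommGroup Y] [Module R Y] (h : DGE R n X) (e : X ≃ₗ[R] Y) : DGE R n Y := by
  obtain ⟨rs, h1, h2, h3⟩ := h
  exact ⟨rs, h1, h2, (e.isWeaklyRegular_congr rs).1 h3⟩

theorem acyc (d : ℕ) : ∀ (R : Type) [CommRing R] [IsLocalRing R] [IsNoetherianRing R]
    (_ : ringKrullDim R ≤ d) (X : Type) [AddCommGroup X] [Module R X]
    [Module.Finite R X] (_ : DGE R d X) (K F N : Type) [AddCommGroup K] [Module R K] [AddCommGroup F] [Module R F]
      [AddCommGroup N] [Module R N] [Module.Free R F] [Module.Finite R F]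
      (i : K →ₗ[R] F) (f : F →ₗ[R] N) (_ : Function.Injective i) (_ : Function.Exact i f)
      (_ : Function.Surjective f) (_ : FFR R K), Function.Injective (i.lTensor X) := by
  induction d using Nat.strong_induction_on with
  | _ d ih =>
  intro R _ _ _ hR X _ _ _ hX K F N _ _ _ _ _ _ _ _ i f hi h hf hK
  obtain ⟨s, hs, hkill⟩ := exists_reg_kill i f hi h hf hK X
  rw [injective_iff_map_eq_zero]
  intro t ht
  have hst := hkill t ht
  by_cases hsu : IsUnit s
  · exact (hsu.smul_eq_zero).1 hst
  have hsm : s ∈ maximalIdeal R := hsu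
  have hsX := reg_transfer d hR X hX s hs
  have hsK : IsSMulRegular K s := (isSMulRegular_free (F := F) hs).of_injective i hi
  suffices hreg : IsSMulRegular (X ⊗[R] K) s from hreg (by simpa using hst)
  cases hK with
  | free => exact hsX.rTensor K
  | step K2 F2 _ i2 f2 hi2 h2 hf2 hK2 =>
    have hsF2 : IsSMulRegular F2 s := isSMulRegular_free (F := F2) hs
    have hsK2 : IsSMulRegular K2 s := hsF2.of_injective i2 hi2
    obtain ⟨d', rfl, hd'⟩ := quot_dim s hsm hs d hR
    obtain ⟨hloc, hlh⟩ := quot_local s hsm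
    let S := R ⧸ Ideal.span {s}
    have hX' : DGE R d' (S ⊗[R] X) := (dge_quot hX s hsX).congr (QuotSMulTop.equivQuotTensor s X)
    have hX'' : DGE S d' (S ⊗[R] X) := hX'.quotRing S _
    have hinj := ih d' (by omega) S hd' (S ⊗[R] X) hX'' (S ⊗[R] K2) (S ⊗[R] F2) (S ⊗[R] K)
      (i2.baseChange S) (f2.baseChange S) (quot_inj i2 f2 hi2 h2 s hsK) (lTensor_exact S h2 hf2)
      (LinearMap.lTensor_surjective S hf2) (hK2.quot s hs hsK2)
    rw [isSMulRegular_iff_right_eq_zero_of_smul]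
    intro y hy
    obtain ⟨z, rfl⟩ := LinearMap.lTensor_surjective X hf2 y
    rw [← map_smul] at hy
    obtain ⟨w, hw⟩ := (lTensor_exact X h2 hf2 _).1 hy
    have hnat : ∀ w : X ⊗[R] K2, (TensorProduct.AlgebraTensorModule.distribBaseChange R S X F2)
        (1 ⊗ₜ (i2.lTensor X w)) = ((i2.baseChange S).lTensor (S ⊗[R] X))
          ((TensorProduct.AlgebraTensorModule.distribBaseChange R S X K2) (1 ⊗ₜ w)) := by
      intro w
      induction w with
      | zero => simp
      | tmul a b => simp
      | add a b ha hb => simp only [map_add, TensorProduct.tmul_add, ha, hb]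
    have hker : ∀ (Q : Type) [AddCommGroup Q] [Module R Q] (q : Q),
        (1 : S) ⊗ₜ[R] q = 0 ↔ ∃ q', q = s • q' := by
      intro Q _ _ q
      have := LinearMap.ker_tensorProductMk (I := Ideal.span {s}) (Q := Q)
      rw [Submodule.ideal_span_singleton_smul] at this
      have h3 : q ∈ LinearMap.ker (TensorProduct.mk R S Q 1) ↔ q ∈ s • (⊤ : Submodule R Q) := by rw [← this]
      rw [LinearMap.mem_ker, Submodule.mem_smul_pointwise_iff_exists] at h3
      refine h3.trans ⟨?_, ?_⟩
      · rintro ⟨a, _, rfl⟩; exact ⟨a, rfl⟩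
      · rintro ⟨a, rfl⟩; exact ⟨a, trivial, rfl⟩
    have hw0 : (1 : S) ⊗ₜ[R] w = 0 := by
      apply (TensorProduct.AlgebraTensorModule.distribBaseChange R S X K2).injective
      apply hinj
      rw [← hnat, hw, (hker _ _).2 ⟨z, rfl⟩]
      simp
    obtain ⟨w', rfl⟩ := (hker _ _).1 hw0
    rw [map_smul] at hw
    have hz : i2.lTensor X w' = z := (hsX.rTensor F2) hw
    rw [← hz]
    exact (lTensor_exact X h2 hf2 _).2 ⟨w', rfl⟩

open CategoryTheory IsLocalRing
open scoped Pointwise TensorProduct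

noncomputable def mkRes {R : Type} [CommRing R] (Z : ModuleCat.{0} R) (C : ChainComplex (ModuleCat.{0} R) ℕ)
    (hp : ∀ n, Projective (C.X n)) (g : C.X 0 ⟶ Z) (w : C.d 1 0 ≫ g = 0)
    (hg : Epi g) (h0 : (ShortComplex.mk _ _ w).Exact) (hs : ∀ n, C.ExactAt (n+1)) :
    ProjectiveResolution Z where
  complex := C
  projective := hp
  π := (ChainComplex.toSingle₀Equiv _ _).symm ⟨g, w⟩
  quasiIso := ⟨fun n => by
    cases n
    · rw [ChainComplex.quasiIsoAt₀_iff, ShortComplex.quasiIso_iff_of_zeros']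
      · refine (ShortComplex.exact_and_epi_g_iff_of_iso ?_).2
          ⟨h0, hg⟩
        refine ShortComplex.isoMk (Iso.refl _) (Iso.refl _) (Iso.refl _) ?_ ?_
        · exact (Category.id_comp _).trans (Category.comp_id _).symm
        · refine (Category.id_comp _).trans (Eq.trans ?_ (Category.comp_id _).symm)
          exact (ChainComplex.toSingle₀Equiv_symm_apply_f_zero g w).symm
      · exact C.shape _ _ (by simp)
      all_goals rfl
    · rw [quasiIsoAt_iff_exactAt']
      · apply hs
      · apply ChainComplex.exactAt_succ_single_obj⟩

theorem mkRes_complex {R : Type} [CommRing R] (Z : ModuleCat.{0} R) (C : ChainComplex (ModuleCat.{0} R) ℕ)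
    (hp : ∀ n, Projective (C.X n)) (g : C.X 0 ⟶ Z) (w : C.d 1 0 ≫ g = 0)
    (hg : Epi g) (h0 : (ShortComplex.mk _ _ w).Exact) (hs : ∀ n, C.ExactAt (n+1)) :
    (mkRes Z C hp g w hg h0 hs).complex = C := rfl

/-- exactness at the bottom of a resolution -/
theorem res_exact0 {R : Type} [CommRing R] {Z : ModuleCat.{0} R} (P : ProjectiveResolution Z) :
    (ShortComplex.mk _ _ P.complex_d_comp_π_f_zero).Exact :=
  ShortComplex.exact_of_g_is_cokernel _ P.isColimitCokernelCofork

section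
variable {R : Type} [CommRing R] {K F N : Type} [AddCommGroup K] [Module R K] [AddCommGroup F] [Module R F]
      [AddCommGroup N] [Module R N] [Module.Free R F]
      (i : K →ₗ[R] F) (f : F →ₗ[R] N) (hi : Function.Injective i) (h : Function.Exact i f)
      (hf : Function.Surjective f) (Q : ProjectiveResolution (ModuleCat.of R K))

noncomputable def qmap : Q.complex.X 0 ⟶ ModuleCat.of R K := Q.π.f 0

theorem qmap_zero : Q.complex.d 1 0 ≫ qmap Q = 0 := Q.complex_d_comp_π_f_zero

theorem qmap_epi : Epi (qmap Q) := inferInstanceAs (Epi (Q.π.f 0))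

theorem qmap_exact : (ShortComplex.mk _ _ (qmap_zero Q)).Exact := res_exact0 Q

noncomputable def spliceC : ChainComplex (ModuleCat.{0} R) ℕ :=
  Q.complex.augment (qmap Q ≫ ModuleCat.ofHom i) (by rw [← Category.assoc, qmap_zero, Limits.zero_comp])

noncomputable def splice (hi : Function.Injective i) (h : Function.Exact i f)
      (hf : Function.Surjective f) : ProjectiveResolution (ModuleCat.of R N) :=
  mkRes _ (spliceC i Q) (by
    intro n
    cases n with
    | zero => exact ModuleCat.projective_of_free (Module.Free.chooseBasis R F)
    | succ n => exact Q.projective n) (ModuleCat.ofHom f) (by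
      show (qmap Q ≫ ModuleCat.ofHom i) ≫ ModuleCat.ofHom f = 0
      rw [Category.assoc, ← ModuleCat.ofHom_comp, h.linearMap_comp_eq_zero, ModuleCat.ofHom_zero, Limits.comp_zero])
    ((ModuleCat.epi_iff_surjective _).2 hf) (by
      rw [ShortComplex.ShortExact.moduleCat_exact_iff_function_exact]
      intro x
      refine (h x).trans ?_
      constructor
      · rintro ⟨y, rfl⟩
        have := qmap_epi Q
        obtain ⟨z, rfl⟩ := (ModuleCat.epi_iff_surjective _).1 this y
        exact ⟨z, rfl⟩
      · rintro ⟨y, rfl⟩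
        exact ⟨_, rfl⟩) (by
      intro n
      rw [HomologicalComplex.exactAt_iff' _ (n+2) (n+1) n (by simp) (by simp)]
      cases n with
      | zero =>
        have h1 := qmap_exact Q
        rw [ShortComplex.ShortExact.moduleCat_exact_iff_function_exact] at h1 ⊢
        intro x
        refine Iff.trans ?_ (h1 x)
        exact ⟨fun hx => hi (hx.trans (map_zero i).symm), fun hx => (congrArg i hx).trans (map_zero i)⟩
      | succ n => exact Q.exact_succ n)

end

section
variable {R : Type} [CommRing R] (M : Type) [AddCommGroup M] [Module R M] {N : Type} [AddCommGroup N] [Module R N]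

theorem torVanish_iff (P : ProjectiveResolution (ModuleCat.of R N)) (n : ℕ) :
    TorVanish R M N (n+1) ↔ Function.Exact ((P.complex.d (n+2) (n+1)).hom.lTensor M)
      ((P.complex.d (n+1) n).hom.lTensor M) := by
  unfold TorVanish
  rw [← ModuleCat.isZero_iff_subsingleton]
  have e : ((Tor (ModuleCat R) (n+1)).obj (ModuleCat.of R M)).obj (ModuleCat.of R N) ≅ _ :=
    P.isoLeftDerivedObj ((MonoidalCategory.tensoringLeft (ModuleCat R)).obj (ModuleCat.of R M)) (n+1)
  rw [e.isZero_iff]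
  erw [← HomologicalComplex.exactAt_iff_isZero_homology]
  rw [HomologicalComplex.exactAt_iff' _ (n+2) (n+1) n (by simp) (by simp)]
  rw [ShortComplex.ShortExact.moduleCat_exact_iff_function_exact]
  rfl

end

open CategoryTheory IsLocalRing
open scoped Pointwise TensorProduct

section
variable {R : Type} [CommRing R] (M : Type) [AddCommGroup M] [Module R M]
  {K F N : Type} [AddCommGroup K] [Module R K] [AddCommGroup F] [Module R F]
      [AddCommGroup N] [Module R N] [Module.Free R F]
      (i : K →ₗ[R] F) (f : F →ₗ[R] N) 

theorem tor_shift (hi : Function.Injective i) (h : Function.Exact i f)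
      (hf : Function.Surjective f) (n : ℕ) : TorVanish R M N (n+2) ↔ TorVanish R M K (n+1) := by
  obtain ⟨Q⟩ : Nonempty (ProjectiveResolution (ModuleCat.of R K)) := HasProjectiveResolution.out
  rw [torVanish_iff M (splice i f Q hi h hf), torVanish_iff M Q]
  rfl

theorem tor_one (hi : Function.Injective i) (h : Function.Exact i f)
      (hf : Function.Surjective f) : TorVanish R M N 1 ↔ Function.Injective (i.lTensor M) := by
  obtain ⟨Q⟩ : Nonempty (ProjectiveResolution (ModuleCat.of R K)) := HasProjectiveResolution.out
  rw [torVanish_iff M (splice i f Q hi h hf)]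
  let q : Q.complex.X 0 →ₗ[R] K := (qmap Q).hom
  have hq : Function.Surjective q := (ModuleCat.epi_iff_surjective _).1 (qmap_epi Q)
  have hex : Function.Exact (Q.complex.d 1 0).hom q :=
    (ShortComplex.ShortExact.moduleCat_exact_iff_function_exact _).1 (qmap_exact Q)
  have h1 := lTensor_exact M hex hq
  have h2 := LinearMap.lTensor_surjective M hq
  show Function.Exact ((Q.complex.d 1 0).hom.lTensor M) ((i ∘ₗ q).lTensor M) ↔ _
  rw [LinearMap.lTensor_comp]
  constructor
  · intro he
    rw [injective_iff_map_eq_zero]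
    intro x hx
    obtain ⟨y, rfl⟩ := h2 x
    exact (h1 y).2 ((he y).1 hx)
  · intro hinj x
    refine Iff.trans ?_ (h1 x)
    exact ⟨fun hx => hinj (hx.trans (map_zero _).symm), fun hx => (congrArg (i.lTensor M) hx).trans (map_zero _)⟩

theorem tor_free (n : ℕ) : TorVanish R M F (n+1) := by
  unfold TorVanish
  rw [← ModuleCat.isZero_iff_subsingleton]
  have : Projective (ModuleCat.of R F) := ModuleCat.projective_of_free (Module.Free.chooseBasis R F)
  exact isZero_Tor_succ_of_projective (ModuleCat R) (ModuleCat.of R M) (ModuleCat.of R F) n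
end

theorem FFR.res {R : Type} [CommRing R] {N : Type} [AddCommGroup N] [Module R N] (h : FFR R N) :
    ∃ (n : ℕ) (P : ProjectiveResolution (ModuleCat.of R N)), ∀ i, n ≤ i → Limits.IsZero (P.complex.X i) := by
  induction h with
  | free N =>
    have : Projective (ModuleCat.of R N) := ModuleCat.projective_of_free (Module.Free.chooseBasis R N)
    refine ⟨1, ProjectiveResolution.self _, fun i hi => ?_⟩
    exact HomologicalComplex.isZero_single_obj_X _ _ _ _ (by omega)
  | step K F N i f hi h hf hK ih =>
    obtain ⟨n, Q, hQ⟩ := ih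
    refine ⟨n+1, splice i f Q hi h hf, fun j hj => ?_⟩
    obtain ⟨j, rfl⟩ : ∃ j', j = j'+1 := ⟨j-1, by omega⟩
    exact hQ j (by omega)

theorem FFR.projDimFinite {R : Type} [CommRing R] {N : Type} [AddCommGroup N] [Module R N] (h : FFR R N) :
    ProjDimFinite R N := by
  obtain ⟨n, P, hP⟩ := h.res
  refine ⟨n, fun Y i hi => ?_⟩
  unfold ExtVanish
  rw [← ModuleCat.isZero_iff_subsingleton]
  refine Limits.IsZero.of_iso ?_ (P.isoExt i _)
  rw [← HomologicalComplex.exactAt_iff_isZero_homology, HomologicalComplex.exactAt_iff]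
  refine ShortComplex.exact_of_isZero_X₂ _ ?_
  rw [Limits.IsZero.iff_id_eq_zero]
  ext (x : _ ⟶ _)
  obtain rfl : x = 0 := (hP i hi).eq_of_src _ _
  rfl

/-- free cover -/
theorem exists_cover (R : Type) [CommRing R] (N : Type) [AddCommGroup N] [Module R N] :
    ∃ (K F : Type) (_ : AddCommGroup K) (_ : Module R K) (_ : AddCommGroup F) (_ : Module R F)
      (_ : Module.Free R F) (i : K →ₗ[R] F) (f : F →ₗ[R] N), Function.Injective i ∧ Function.Exact i f ∧
      Function.Surjective f := by
  let f : (N →₀ R) →ₗ[R] N := Finsupp.linearCombination R id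
  refine ⟨LinearMap.ker f, (N →₀ R), inferInstance, inferInstance, inferInstance, inferInstance, inferInstance,
    (LinearMap.ker f).subtype, f, Subtype.val_injective, LinearMap.exact_subtype_ker_map f, ?_⟩
  exact Finsupp.linearCombination_id_surjective R N

theorem exists_fcover (R : Type) [CommRing R] [IsNoetherianRing R] (N : Type) [AddCommGroup N] [Module R N] [Module.Finite R N] :
    ∃ (K F : Type) (_ : AddCommGroup K) (_ : Module R K) (_ : AddCommGroup F) (_ : Module R F)
      (_ : Module.Free R F) (_ : Module.Finite R F) (_ : Module.Finite R K) (i : K →ₗ[R] F) (f : F →ₗ[R] N), Function.Injective i ∧ Function.Exact i f ∧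
      Function.Surjective f := by
  obtain ⟨n, f, hf⟩ := Module.Finite.exists_fin' R N
  exact ⟨LinearMap.ker f, (Fin n → R), inferInstance, inferInstance, inferInstance, inferInstance, inferInstance,
    inferInstance, inferInstance, 
    (LinearMap.ker f).subtype, f, Subtype.val_injective, LinearMap.exact_subtype_ker_map f, hf⟩

/-- retract in the first variable -/
theorem tor_retract {R : Type} [CommRing R] {V W : Type} [AddCommGroup V] [Module R V] [AddCommGroup W] [Module R W]
    (a : W →ₗ[R] V) (b : V →ₗ[R] W) (hab : b ∘ₗ a = LinearMap.id) (n : ℕ) :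
    ∀ (N : Type) [AddCommGroup N] [Module R N] (_ : TorVanish R V N (n+1)), TorVanish R W N (n+1) := by
  induction n with
  | zero =>
    intro N _ _ hv
    obtain ⟨K, F, _, _, _, _, _, i, f, hi, h, hf⟩ := exists_cover R N
    rw [zero_add, tor_one _ i f hi h hf] at hv ⊢
    rw [injective_iff_map_eq_zero]
    intro x hx
    have h1 : a.rTensor K x = 0 := by
      apply hv
      rw [← LinearMap.comp_apply, LinearMap.lTensor_comp_rTensor, ← LinearMap.rTensor_comp_lTensor, LinearMap.comp_apply, hx]
      simp
    have h2 : b.rTensor K (a.rTensor K x) = x := by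
      rw [← LinearMap.rTensor_comp_apply, hab]; simp
    rw [← h2, h1, map_zero]
  | succ n ih =>
    intro N _ _ hv
    obtain ⟨K, F, _, _, _, _, _, i, f, hi, h, hf⟩ := exists_cover R N
    rw [tor_shift _ i f hi h hf] at hv ⊢
    exact ih K hv

theorem tor_flat {R : Type} [CommRing R] (V : Type) [AddCommGroup V] [Module R V] [Module.Flat R V] (n : ℕ) :
    ∀ (N : Type) [AddCommGroup N] [Module R N], TorVanish R V N (n+1) := by
  induction n with
  | zero =>
    intro N _ _
    obtain ⟨K, F, _, _, _, _, _, i, f, hi, h, hf⟩ := exists_cover R N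
    rw [zero_add, tor_one _ i f hi h hf]
    exact Module.Flat.lTensor_preserves_injective_linearMap i hi
  | succ n ih =>
    intro N _ _
    obtain ⟨K, F, _, _, _, _, _, i, f, hi, h, hf⟩ := exists_cover R N
    rw [tor_shift _ i f hi h hf]
    exact ih K

section
variable {R : Type} [CommRing R] {A B C : Type} [AddCommGroup A] [Module R A] [AddCommGroup B] [Module R B]
   [AddCommGroup C] [Module R C] (u : A →ₗ[R] B) (v : B →ₗ[R] C) 

theorem tens_comm {A B K F : Type} [AddCommGroup A] [Module R A] [AddCommGroup B] [Module R B]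
   [AddCommGroup K] [Module R K] [AddCommGroup F] [Module R F] (u : A →ₗ[R] B) (i : K →ₗ[R] F) (x : A ⊗[R] K) :
   u.rTensor F (i.lTensor A x) = i.lTensor B (u.rTensor K x) := by
  rw [← LinearMap.comp_apply, ← LinearMap.comp_apply, LinearMap.lTensor_comp_rTensor, ← LinearMap.rTensor_comp_lTensor]

theorem tor_les_A (hu : Function.Injective u) (huv : Function.Exact u v) (hv : Function.Surjective v) (n : ℕ) :
    ∀ (N : Type) [AddCommGroup N] [Module R N] (_ : TorVanish R B N (n+1)) (_ : TorVanish R C N (n+2)),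
     TorVanish R A N (n+1) := by
  induction n with
  | zero =>
    intro N _ _ hB hC
    obtain ⟨K, F, _, _, _, _, _, i, f, hi, h, hf⟩ := exists_cover R N
    obtain ⟨K2, F2, _, _, _, _, _, i2, f2, hi2, h2, hf2⟩ := exists_cover R K
    rw [tor_shift _ i f hi h hf, zero_add, tor_one _ i2 f2 hi2 h2 hf2] at hC
    rw [zero_add, tor_one _ i f hi h hf] at hB ⊢
    rw [injective_iff_map_eq_zero]
    intro x hx
    have hx0 : u.rTensor K x = 0 := hB (by rw [← tens_comm, hx]; simp)
    obtain ⟨y, rfl⟩ := LinearMap.lTensor_surjective A hf2 x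
    rw [tens_comm] at hx0
    obtain ⟨z, hz⟩ := (lTensor_exact B h2 hf2 _).1 hx0
    have hz0 : v.rTensor K2 z = 0 := hC (by
      rw [← tens_comm, hz, map_zero, (rTensor_exact F2 huv hv _).2 ⟨y, rfl⟩])
    obtain ⟨z', rfl⟩ := (rTensor_exact K2 huv hv _).1 hz0
    rw [← tens_comm] at hz
    have := Module.Flat.rTensor_preserves_injective_linearMap (M := F2) u hu hz
    rw [← this]
    exact (lTensor_exact A h2 hf2 _).2 ⟨z', rfl⟩
  | succ n ih =>
    intro N _ _ hB hC
    obtain ⟨K, F, _, _, _, _, _, i, f, hi, h, hf⟩ := exists_cover R N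
    rw [tor_shift _ i f hi h hf] at hB hC ⊢
    exact ih K hB hC

theorem tor_les_C (hu : Function.Injective u) (huv : Function.Exact u v) (hv : Function.Surjective v) (n : ℕ) :
    ∀ (N : Type) [AddCommGroup N] [Module R N] (_ : TorVanish R A N (n+1)) (_ : TorVanish R B N (n+2)),
     TorVanish R C N (n+2) := by
  induction n with
  | zero =>
    intro N _ _ hA hB
    obtain ⟨K, F, _, _, _, _, _, i, f, hi, h, hf⟩ := exists_cover R N
    obtain ⟨K2, F2, _, _, _, _, _, i2, f2, hi2, h2, hf2⟩ := exists_cover R K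
    rw [tor_shift _ i f hi h hf, zero_add, tor_one _ i2 f2 hi2 h2 hf2] at hB ⊢
    rw [zero_add, tor_one _ i f hi h hf] at hA 
    rw [injective_iff_map_eq_zero]
    intro z hz
    obtain ⟨b, rfl⟩ := LinearMap.rTensor_surjective K2 hv z
    rw [← tens_comm] at hz
    obtain ⟨a, ha⟩ := (rTensor_exact F2 huv hv _).1 hz
    have ha' : f2.lTensor A a = 0 := by
      apply hA
      apply Module.Flat.rTensor_preserves_injective_linearMap (M := F) u hu
      rw [tens_comm, tens_comm, ha, (lTensor_exact B h2 hf2 _).2 ⟨b, rfl⟩]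
      simp
    obtain ⟨a'', rfl⟩ := (lTensor_exact A h2 hf2 _).1 ha'
    rw [tens_comm] at ha
    rw [← hB ha]
    exact (rTensor_exact K2 huv hv _).2 ⟨a'', rfl⟩
  | succ n ih =>
    intro N _ _ hA hB
    obtain ⟨K, F, _, _, _, _, _, i, f, hi, h, hf⟩ := exists_cover R N
    rw [tor_shift _ i f hi h hf] at hA hB ⊢
    exact ih K hA hB

theorem tor_shift_left [Module.Free R B] (hu : Function.Injective u) (huv : Function.Exact u v) (hv : Function.Surjective v) (n : ℕ) 
    (N : Type) [AddCommGroup N] [Module R N] : TorVanish R C N (n+2) ↔ TorVanish R A N (n+1) :=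
  ⟨fun h => tor_les_A u v hu huv hv n N (tor_flat B n N) h, fun h => tor_les_C u v hu huv hv n N h (tor_flat B (n+1) N)⟩
end

open CategoryTheory IsLocalRing
open scoped Pointwise TensorProduct

theorem tor_equiv {R : Type} [CommRing R] {V W : Type} [AddCommGroup V] [Module R V] [AddCommGroup W] [Module R W]
    (e : V ≃ₗ[R] W) (n : ℕ) (N : Type) [AddCommGroup N] [Module R N] (h : TorVanish R V N (n+1)) :
    TorVanish R W N (n+1) :=
  tor_retract e.symm.toLinearMap e.toLinearMap (by ext; simp) n N h

theorem tor_quot {R : Type} [CommRing R] (N : Type) [AddCommGroup N] [Module R N] (rs : List R) :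
    ∀ (L : Type) [AddCommGroup L] [Module R L] (_ : RingTheory.Sequence.IsWeaklyRegular L rs) (b : ℕ)
    (_ : ∀ i, b ≤ i → i ≤ b + rs.length → TorVanish R L N (i+1)),
    TorVanish R (L ⧸ (Ideal.ofList rs • ⊤ : Submodule R L)) N (b + rs.length + 1) := by
  induction rs with
  | nil =>
    intro L _ _ _ b h
    exact tor_equiv (Submodule.quotEquivOfEqBot _ (by simp)).symm _ N (h b le_rfl (by simp))
  | cons r rs ih =>
    intro L _ _ hL b h
    rw [RingTheory.Sequence.isWeaklyRegular_cons_iff] at hL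
    have h1 := ih (QuotSMulTop r L) hL.2 (b+1) (by
      intro i hi hi'
      obtain ⟨i, rfl⟩ : ∃ j, i = j + 1 := ⟨i-1, by omega⟩
      refine tor_les_C (LinearMap.lsmul R L r) (Submodule.mkQ (r • ⊤ : Submodule R L)) hL.1 ?_ (Submodule.mkQ_surjective _) i N
        (h i (by omega) (by simp; omega)) (h (i+1) (by omega) (by simp; omega))
      intro x
      rw [Submodule.mkQ_apply, Submodule.Quotient.mk_eq_zero, Submodule.mem_smul_pointwise_iff_exists]
      simp)
    have h2 := tor_equiv (Submodule.quotOfListConsSMulTopEquivQuotSMulTopInner L r rs).symm _ N h1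
    rwa [show b + (r :: rs).length + 1 = b + 1 + rs.length + 1 by simp; omega]

theorem ffr_of_tor {R : Type} [CommRing R] [IsLocalRing R] [IsNoetherianRing R] (n : ℕ) :
    ∀ (N : Type) [AddCommGroup N] [Module R N] [Module.Finite R N]
    (_ : TorVanish R (ResidueField R) N (n+1)), FFR R N := by
  induction n with
  | zero =>
    intro N _ _ _ hN
    obtain ⟨K, F, _, _, _, _, _, _, _, i, f, hi, h, hf⟩ := exists_fcover R N
    rw [zero_add, tor_one _ i f hi h hf] at hN
    have := Module.free_of_lTensor_residueField_injective i f hf h hN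
    exact FFR.free N
  | succ n ih =>
    intro N _ _ _ hN
    obtain ⟨K, F, _, _, _, _, _, _, _, i, f, hi, h, hf⟩ := exists_fcover R N
    rw [tor_shift _ i f hi h hf] at hN
    exact FFR.step K F N i f hi h hf (ih K hN)

theorem tor_ffr {R : Type} [CommRing R] [IsLocalRing R] [IsNoetherianRing R] {d : ℕ}
    (hR : ringKrullDim R ≤ d) (X : Type) [AddCommGroup X] [Module R X] [Module.Finite R X] (hX : DGE R d X)
    {N : Type} [AddCommGroup N] [Module R N] (hN : FFR R N) : ∀ n, TorVanish R X N (n+1) := by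
  induction hN with
  | free N => exact fun n => tor_free X n
  | step K F N i f hi h hf hK ih =>
    intro n
    cases n with
    | zero => 
      rw [zero_add, tor_one _ i f hi h hf]
      exact acyc d R hR X hX K F N i f hi h hf hK
    | succ n =>
      rw [tor_shift _ i f hi h hf]
      exact ih n

theorem DGE.zero {R : Type} [CommRing R] [IsLocalRing R] (X : Type) [AddCommGroup X] [Module R X] : DGE R 0 X :=
  ⟨[], rfl, by simp, by simp⟩

theorem syz {R : Type} [CommRing R] [IsLocalRing R] [IsNoetherianRing R] {d : ℕ} (hR : DGE R d R) (e : ℕ) :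
    ∀ (M : Type) [AddCommGroup M] [Module R M] [Module.Finite R M] (_ : DGE R (d - e) M),
    ∃ (X : Type) (_ : AddCommGroup X) (_ : Module R X) (_ : Module.Finite R X), DGE R d X ∧
      (∀ (N : Type) [AddCommGroup N] [Module R N] (n : ℕ), TorVanish R M N (n + e + 1) ↔ TorVanish R X N (n+1)) ∧
      (FFR R X → FFR R M) := by
  induction e with
  | zero =>
    intro M _ _ _ hM
    exact ⟨M, _, _, inferInstance, hM, fun N _ _ n => Iff.rfl, id⟩
  | succ e ih =>
    intro M _ _ _ hM
    obtain ⟨K, F, _, _, _, _, _, _, _, i, f, hi, h, hf⟩ := exists_fcover R M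
    have hK : DGE R (d - e) K := by
      by_cases hde : e + 1 ≤ d
      · rw [show d - e = d - (e+1) + 1 by omega]
        exact dge_left i f h hi hf ((hR.free F).mono (by omega)) hM
      · rw [show d - e = 0 by omega]; exact DGE.zero K
    obtain ⟨X, _, _, _, h1, h2, h3⟩ := ih K hK
    refine ⟨X, inferInstance, inferInstance, inferInstance, h1, fun N _ _ n => ?_, fun hX => FFR.step K F M i f hi h hf (h3 hX)⟩
    rw [← h2, show n + (e+1) + 1 = n + e + 2 by omega]
    exact tor_shift_left i f hi h hf _ N

theorem min_cover {R : Type} [CommRing R] [IsLocalRing R] [IsNoetherianRing R] (X : Type) [AddCommGroup X] [Module R X]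
    [Module.Finite R X] : 
    ∃ (F : Type) (_ : AddCommGroup F) (_ : Module R F)
      (_ : Module.Free R F) (_ : Module.Finite R F) (f : F →ₗ[R] X), 
      Function.Surjective f ∧ LinearMap.ker f ≤ maximalIdeal R • ⊤ := by
  let k := ResidueField R
  let b := Module.Free.chooseBasis k (k ⊗[R] X)
  have hsurj := TensorProduct.mk_surjective R X k IsLocalRing.residue_surjective
  choose v hv using fun j => hsurj (b j)
  let f := Finsupp.linearCombination R v
  refine ⟨_ →₀ R, inferInstance, inferInstance, inferInstance, inferInstance, f, ?_, ?_⟩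
  · rw [← LinearMap.range_eq_top, Finsupp.range_linearCombination]
    exact IsLocalRing.span_eq_top_of_tmul_eq_basis v b hv
  · intro a ha
    have hlc : ∀ j, a j ∈ maximalIdeal R := by
      have h1 : (1 : k) ⊗ₜ[R] (f a) = 0 := by rw [LinearMap.mem_ker.1 ha]; simp
      have h2 : (1 : k) ⊗ₜ[R] (f a) = Finsupp.linearCombination k b (a.mapRange (residue R) (map_zero _)) := by
        rw [Finsupp.linearCombination_apply, Finsupp.linearCombination_apply, Finsupp.sum_mapRange_index (by simp)]
        simp only [Finsupp.sum, TensorProduct.tmul_sum]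
        refine Finset.sum_congr rfl fun j _ => ?_
        rw [← hv j, TensorProduct.mk_apply, TensorProduct.tmul_smul, TensorProduct.smul_tmul', TensorProduct.smul_tmul']
        congr 1

      rw [h1] at h2
      have h3 := linearIndependent_iff.1 b.linearIndependent _ h2.symm
      intro j
      have h4 := DFunLike.congr_fun h3 j
      exact (IsLocalRing.residue_eq_zero_iff _).1 h4
    rw [← Finsupp.sum_single a]
    refine Submodule.sum_mem _ fun j _ => ?_
    rw [← mul_one (a j), ← smul_eq_mul, ← Finsupp.smul_single]
    exact Submodule.smul_mem_smul (hlc j) trivial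

theorem residue_retract {R : Type} [CommRing R] [IsLocalRing R] (V : Type) [AddCommGroup V] [Module R V] [Nontrivial V]
    (hV : ∀ a ∈ maximalIdeal R, ∀ v : V, a • v = 0) :
    ∃ (a : ResidueField R →ₗ[R] V) (b : V →ₗ[R] ResidueField R), b ∘ₗ a = LinearMap.id := by
  have ht : Module.IsTorsionBySet R V (maximalIdeal R : Set R) := fun v a => hV a a.2 v
  let _ : Module (ResidueField R) V := ht.module
  have : IsScalarTower R (ResidueField R) V := ht.isScalarTower
  obtain ⟨v, hv⟩ := exists_ne (0 : V)
  let a := LinearMap.toSpanSingleton (ResidueField R) V v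
  obtain ⟨b, hb⟩ := a.exists_leftInverse_of_injective (LinearMap.ker_toSpanSingleton (ResidueField R) hv)
  exact ⟨a.restrictScalars R, b.restrictScalars R, by ext x; exact LinearMap.congr_fun hb _⟩

theorem depth_dge {R : Type} [CommRing R] [IsLocalRing R] (M : Type) [AddCommGroup M] [Module R M] (t : ℕ)
    (ht : depth R M = (t : ℕ∞)) : DGE R t M := by
  rcases Nat.eq_zero_or_pos t with rfl | htp
  · exact DGE.zero M
  obtain ⟨s, rfl⟩ : ∃ s, t = s + 1 := ⟨t - 1, by omega⟩
  have h : (s : ℕ∞) < depth R M := by rw [ht]; exact_mod_cast Nat.lt_succ_self s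
  unfold depth at h
  obtain ⟨_, ⟨rs, h1, h2, rfl⟩, hb⟩ := lt_sSup_iff.1 h
  have hle : (rs.length : ℕ∞) ≤ depth R M := le_sSup ⟨rs, h1, h2, rfl⟩
  rw [ht] at hle
  have ha : rs.length ≤ s + 1 := by exact_mod_cast hle
  have hb' : s < rs.length := by exact_mod_cast hb
  exact ⟨rs, by omega, h1, h2.toIsWeaklyRegular⟩

theorem main_aux (R : Type) [CommRing R] [IsNoetherianRing R] [IsLocalRing R]
    (d : ℕ) (hdim : ringKrullDim R ≤ (d : WithBot ℕ∞))
    (rs : List R) (hlen : rs.length = d) (hmem : ∀ x ∈ rs, x ∈ maximalIdeal R)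
    (hreg : RingTheory.Sequence.IsWeaklyRegular R rs)
    (hmin : maximalIdeal R ^ 2 = Ideal.ofList rs * maximalIdeal R)
    (X N : Type) [AddCommGroup X] [Module R X] [Module.Finite R X]
    [AddCommGroup N] [Module R N] [Module.Finite R N] (hX : DGE R d X) (b : ℕ)
    (hvan : ∀ i : ℕ, b ≤ i → i ≤ b + d → TorVanish R X N (i+2)) :
    Module.Free R X ∨ FFR R N := by
  have hRR : DGE R d R := ⟨rs, hlen, hmem, hreg⟩
  obtain ⟨F, _, _, _, _, f, hf, hker⟩ := min_cover (R := R) X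
  let L := LinearMap.ker f
  let i : L →ₗ[R] F := L.subtype
  have hi : Function.Injective i := Subtype.val_injective
  have hex : Function.Exact i f := LinearMap.exact_subtype_ker_map f
  have hL : DGE R d L := by
    cases d with
    | zero => exact DGE.zero L
    | succ d => exact dge_left i f hex hi hf (hRR.free F) (hX.mono (by omega))
  have hrL := weaklyRegular_transfer d R rs hlen hmem hreg d hdim L hL
  have hrX := weaklyRegular_transfer d R rs hlen hmem hreg d hdim X hX
  have hT := tor_quot N rs L hrL b (by
    intro j hj hj'
    rw [← tor_shift_left i f hi hex hf]
    exact hvan j hj (by omega))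
  let V := L ⧸ (Ideal.ofList rs • ⊤ : Submodule R L)
  have hV : ∀ a ∈ maximalIdeal R, ∀ v : V, a • v = 0 := by
    intro a ha v
    obtain ⟨y, rfl⟩ := Submodule.Quotient.mk_surjective _ v
    rw [← Submodule.Quotient.mk_smul]
    have h0 : Function.Exact (0 : L →ₗ[R] L) i := by
      intro x
      constructor
      · intro hx; exact ⟨0, by simpa using (hi (by simpa using hx)).symm⟩
      · rintro ⟨y, rfl⟩; simp
    have h1 := RingTheory.Sequence.map_first_exact_on_four_term_right_exact_of_isSMulRegular_last h0 hex hf hrX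
    have h2 : a • (y : F) ∈ Ideal.ofList rs • (⊤ : Submodule R F) := by
      have h3 : a • (y : F) ∈ maximalIdeal R • (maximalIdeal R • (⊤ : Submodule R F)) :=
        Submodule.smul_mem_smul ha (hker y.2)
      rw [← Submodule.mul_smul, ← pow_two, hmin, Submodule.mul_smul] at h3
      exact Submodule.smul_mono le_rfl le_top h3
    obtain ⟨z, hz⟩ := (h1 (Submodule.Quotient.mk (a • y))).1 (by
      rw [Submodule.mapQ_apply, Submodule.Quotient.mk_eq_zero]
      exact h2)
    rw [← hz]
    obtain ⟨z, rfl⟩ := Submodule.Quotient.mk_surjective _ z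
    rw [Submodule.mapQ_apply]; simp
  rcases subsingleton_or_nontrivial V with hs | hn
  · left
    have h1 : (Ideal.ofList rs • ⊤ : Submodule R L) = ⊤ := Submodule.Quotient.subsingleton_iff.1 hs
    have h2 : (⊤ : Submodule R L) = ⊥ := by
      refine Submodule.eq_bot_of_le_smul_of_le_jacobson_bot (Ideal.ofList rs) _ Module.Finite.fg_top h1.ge ?_
      refine le_trans ?_ (IsLocalRing.maximalIdeal_le_jacobson _)
      exact Ideal.span_le.2 hmem
    have h3 : Function.Injective f := by
      rw [← LinearMap.ker_eq_bot, eq_bot_iff]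
      intro x hx
      have : (⟨x, hx⟩ : L) ∈ (⊤ : Submodule R L) := trivial
      rw [h2] at this
      simpa using this
    exact Module.Free.of_equiv (LinearEquiv.ofBijective f ⟨h3, hf⟩)
  · right
    obtain ⟨p, q, hpq⟩ := residue_retract V hV
    exact ffr_of_tor _ N (tor_retract p q hpq _ N hT)

theorem statement13 (R : Type) [CommRing R] [IsNoetherianRing R] [IsLocalRing R]
    (d : ℕ) (hdim : ringKrullDim R = (d : WithBot ℕ∞)) (hCM : depth R R = (d : ℕ∞))
    (hmin : HasMinimalMultiplicity R d)
    (M N : Type) [AddCommGroup M] [Module R M] [Module.Finite R M]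
    [AddCommGroup N] [Module R N] [Module.Finite R N]
    (t : ℕ) (ht : depth R M = (t : ℕ∞))
    (a : ℕ) (ha : d - t + 2 ≤ a)
    (hvan : ∀ i : ℕ, a ≤ i → i ≤ a + d → TorVanish R M N i) :
    (ProjDimFinite R M ∨ ProjDimFinite R N) ∧
    ∀ i : ℕ, d - t + 1 ≤ i → TorVanish R M N i := by
  obtain ⟨rs, hlen, hmem, hreg, hm⟩ := hmin
  have hRR : DGE R d R := ⟨rs, hlen, hmem, hreg⟩
  have hM : DGE R (d - (d - t)) M := (depth_dge M t ht).mono (by omega)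
  obtain ⟨X, _, _, _, hX, hTor, hFFR⟩ := syz hRR (d - t) M hM
  have key : (ProjDimFinite R M ∨ ProjDimFinite R N) ∧ ∀ n, TorVanish R X N (n+1) := by
    rcases main_aux R d hdim.le rs hlen hmem hreg hm X N hX (a - (d - t) - 2) (by
      intro i hi hi'
      rw [← hTor]
      exact hvan _ (by omega) (by omega)) with h | h
    · exact ⟨Or.inl (hFFR (FFR.free X)).projDimFinite, fun n => tor_flat X n N⟩
    · exact ⟨Or.inr h.projDimFinite, tor_ffr hdim.le X hX h⟩
  refine ⟨key.1, fun i hi => ?_⟩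
  have := (hTor N (i - (d - t) - 1)).2 (key.2 _)
  rwa [show i - (d - t) - 1 + (d - t) + 1 = i by omega] at this
end

section
/- Let (R, m, k) be a Cohen–Macaulay commutative Noetherian local ring of dimension d with minimal multiplicity, i.e., there exists an R-regular sequence x₁, …, x_d ∈ m with m² = (x₁, …, x_d)m. Let M be a finitely generated R-module with t = depth_R M. If Ext_R^i(M, M) = 0 for all 1 ≤ i ≤ d+1 and Ext_R^j(M, R) = 0 for all 1 ≤ j ≤ 2d − t + 2, then M is a free R-module. -/
open CategoryTheory IsLocalRing

open CategoryTheory.Abelian in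
/-- vanishing of the derived category Ext -/
abbrev VV {R : Type} [CommRing R] (X Y : ModuleCat.{0} R) (i : ℕ) : Prop :=
  Subsingleton (CategoryTheory.Abelian.Ext X Y i)

lemma vv_of_extVanish {R : Type} [CommRing R] (M N : Type) [AddCommGroup M] [Module R M]
    [AddCommGroup N] [Module R N] (i : ℕ) (h : ExtVanish R M N (i+1)) :
    VV (ModuleCat.of R M) (ModuleCat.of R N) (i+1) := by
  let P := projectiveResolution (ModuleCat.of R M)
  have e := P.isoExt (R := R) (i+1) (ModuleCat.of R N)
  have h1 : Subsingleton ((P.complex.linearYonedaObj R (ModuleCat.of R N)).homology (i+1)) := by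
    unfold ExtVanish at h
    exact e.toLinearEquiv.symm.toEquiv.subsingleton
  have h2 : (P.complex.linearYonedaObj R (ModuleCat.of R N)).ExactAt (i+1) := by
    rw [HomologicalComplex.exactAt_iff_isZero_homology]
    exact ModuleCat.isZero_of_subsingleton _
  rw [HomologicalComplex.exactAt_iff' _ i (i+1) (i+2) (by simp) (by simp)] at h2
  rw [ShortComplex.moduleCat_exact_iff] at h2
  refine ⟨fun a b => ?_⟩
  suffices ∀ a : CategoryTheory.Abelian.Ext (ModuleCat.of R M) (ModuleCat.of R N) (i+1), a = 0 by
    rw [this a, this b]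
  intro a
  obtain ⟨f, hf, rfl⟩ := P.extMk_surjective a (i+2) rfl
  rw [P.extMk_eq_zero_iff _ _ _ _ i rfl]
  obtain ⟨g, hg⟩ := h2 f (by exact hf)
  exact ⟨g, hg⟩

section LES
open CategoryTheory.Abelian

variable {R : Type} [CommRing R]

lemma vv_of_zero {X Y : ModuleCat.{0} R} {i : ℕ}
    (h : ∀ a : CategoryTheory.Abelian.Ext X Y i, a = 0) : VV X Y i :=
  ⟨fun a b => by rw [h a, h b]⟩

lemma vv_iso_left {X X' Y : ModuleCat.{0} R} (e : X ≅ X') {i : ℕ} (h : VV X Y i) : VV X' Y i := by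
  refine vv_of_zero fun a => ?_
  have h1 : (Ext.mk₀ e.inv).comp ((Ext.mk₀ e.hom).comp a (zero_add i)) (zero_add i) = a := by
    rw [Ext.mk₀_comp_mk₀_assoc]; simp
  rw [← h1, Subsingleton.elim ((Ext.mk₀ e.hom).comp a (zero_add i)) 0, Ext.comp_zero]

lemma vv_iso_right {X Y Y' : ModuleCat.{0} R} (e : Y ≅ Y') {i : ℕ} (h : VV X Y i) : VV X Y' i := by
  refine vv_of_zero fun a => ?_
  have h1 : (a.comp (Ext.mk₀ e.inv) (add_zero i)).comp (Ext.mk₀ e.hom) (add_zero i) = a := by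
    simp
  rw [← h1, Subsingleton.elim (a.comp (Ext.mk₀ e.inv) (add_zero i)) 0, Ext.zero_comp]

lemma vv_cov1 (X : ModuleCat.{0} R) {S : ShortComplex (ModuleCat.{0} R)} (hS : S.ShortExact) {i : ℕ}
    (h3 : VV X S.X₃ i) (h2 : VV X S.X₂ (i+1)) : VV X S.X₁ (i+1) := by
  refine vv_of_zero fun a => ?_
  obtain ⟨b, hb⟩ := Ext.covariant_sequence_exact₁ X hS a (Subsingleton.elim _ _) rfl
  rw [← hb, Subsingleton.elim b 0, Ext.zero_comp]

lemma vv_cov1_zero (X : ModuleCat.{0} R) {S : ShortComplex (ModuleCat.{0} R)} (hS : S.ShortExact)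
    (h2 : VV X S.X₂ 0) : VV X S.X₁ 0 := by
  refine vv_of_zero fun a => ?_
  have := hS.mono_f
  exact Ext.postcomp_mk₀_injective_of_mono X S.f (Subsingleton.elim _ _)

lemma vv_cov3 (X : ModuleCat.{0} R) {S : ShortComplex (ModuleCat.{0} R)} (hS : S.ShortExact) {i : ℕ}
    (h2 : VV X S.X₂ i) (h1 : VV X S.X₁ (i+1)) : VV X S.X₃ i := by
  refine vv_of_zero fun a => ?_
  obtain ⟨b, hb⟩ := Ext.covariant_sequence_exact₃ X hS a rfl (Subsingleton.elim _ _)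
  rw [← hb, Subsingleton.elim b 0, Ext.zero_comp]

lemma vv_con1 (Y : ModuleCat.{0} R) {S : ShortComplex (ModuleCat.{0} R)} (hS : S.ShortExact) {i : ℕ}
    (h3 : VV S.X₃ Y (i+1)) (h2 : VV S.X₂ Y i) : VV S.X₁ Y i := by
  refine vv_of_zero fun a => ?_
  obtain ⟨b, hb⟩ := Ext.contravariant_sequence_exact₁ hS Y a (add_comm 1 i) (Subsingleton.elim _ _)
  rw [← hb, Subsingleton.elim b 0, Ext.comp_zero]

lemma vv_free (X : ModuleCat.{0} R) {i : ℕ} (h : VV X (ModuleCat.of R R) i)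
    (F : Type) [AddCommGroup F] [Module R F] [Module.Free R F] [Module.Finite R F] :
    VV X (ModuleCat.of R F) i := by
  classical
  refine vv_of_zero fun a => ?_
  let b := Module.Free.chooseBasis R F
  have h1 : 𝟙 (ModuleCat.of R F) = ∑ j, (ModuleCat.ofHom (b.coord j) ≫
      ModuleCat.ofHom (LinearMap.toSpanSingleton R F (b j))) := by
    ext x
    simp [ModuleCat.hom_sum, b.sum_repr]
  rw [← a.comp_mk₀_id, h1, Ext.mk₀_sum, Ext.comp_sum]
  refine Finset.sum_eq_zero fun j _ => ?_
  rw [← Ext.mk₀_comp_mk₀, ← Ext.comp_assoc_of_second_deg_zero,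
    Subsingleton.elim (a.comp (Ext.mk₀ (ModuleCat.ofHom (b.coord j))) (add_zero i)) 0, Ext.zero_comp]

end LES

section Local
open CategoryTheory.Abelian
open RingTheory.Sequence Pointwise

variable {R : Type} [CommRing R]

lemma pd_step [IsNoetherianRing R] (X : ModuleCat.{0} R) [Module.Finite R X] (n : ℕ)
    (h : HasProjectiveDimensionLT X (n+2)) (hR : VV X (ModuleCat.of R R) (n+1)) :
    HasProjectiveDimensionLT X (n+1) := by
  apply ModuleCat.hasProjectiveDimensionLT_of_forall_finite
  intro L _
  obtain ⟨P, _, _, _, _, f, surjf⟩ := Module.exists_finite_presentation R L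
  have hS := LinearMap.shortExact_shortComplexKer surjf
  exact vv_cov3 X hS (vv_free X hR P)
    (HasProjectiveDimensionLT.subsingleton X (n+2) (n+2) le_rfl _)

lemma pd_proj [IsNoetherianRing R] (X : ModuleCat.{0} R) [Module.Finite R X] (n : ℕ)
    (h : HasProjectiveDimensionLT X (n+1))
    (hR : ∀ i, 1 ≤ i → i ≤ n → VV X (ModuleCat.of R R) i) : Projective X := by
  induction n with
  | zero => exact projective_iff_hasProjectiveDimensionLT_one.2 h
  | succ n ih =>
    exact ih (pd_step X n h (hR _ (by omega) le_rfl)) fun i h1 h2 => hR i h1 (by omega)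

variable [IsLocalRing R] [IsNoetherianRing R]

lemma exists_min_cover (X : Type) [AddCommGroup X] [Module R X] [Module.Finite R X] :
    ∃ (n : ℕ) (f : (Fin n → R) →ₗ[R] X), Function.Surjective f ∧
      LinearMap.ker f ≤ maximalIdeal R • ⊤ := by
  classical
  let b := Module.finBasis (ResidueField R) (TensorProduct R (ResidueField R) X)
  have hs : ∀ j, ∃ x : X, (1 : ResidueField R) ⊗ₜ[R] x = b j := by
    intro j
    obtain ⟨x, hx⟩ := TensorProduct.mk_surjective R X (ResidueField R) Ideal.Quotient.mk_surjective (b j)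
    exact ⟨x, hx⟩
  choose v hv using hs
  refine ⟨_, Fintype.linearCombination R v, ?_, ?_⟩
  · rw [← LinearMap.range_eq_top, Fintype.range_linearCombination]
    exact IsLocalRing.span_eq_top_of_tmul_eq_basis v b hv
  · intro r hr
    have h1 : ∑ j, residue R (r j) • b j = 0 := by
      have h2 : ∑ j, r j • v j = 0 := by simpa [Fintype.linearCombination_apply] using hr
      have h3 := congrArg (fun x => (1 : ResidueField R) ⊗ₜ[R] x) h2
      simp only [TensorProduct.tmul_sum, TensorProduct.tmul_zero, TensorProduct.tmul_smul] at h3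
      rw [← h3]
      refine Finset.sum_congr rfl fun j _ => ?_
      rw [hv]
      rfl
    have h2 := Fintype.linearIndependent_iff.1 b.linearIndependent _ h1
    have h3 : r = ∑ j, r j • (Pi.single j 1 : Fin _ → R) := by
      exact pi_eq_sum_univ' r |>.trans (Finset.sum_congr rfl fun j _ => by
        congr 1)
    rw [h3]
    exact Submodule.sum_mem _ fun j _ => Submodule.smul_mem_smul
      ((residue_eq_zero_iff _).1 (h2 j)) trivial

lemma subsingleton_of_hom (K W : Type) [AddCommGroup K] [Module R K] [Module.Finite R K]
    [AddCommGroup W] [Module R W] [Module.Finite R W] [Nontrivial W]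
    (hW : ∀ a ∈ maximalIdeal R, ∀ w : W, a • w = 0) (h : Subsingleton (K →ₗ[R] W)) :
    Subsingleton K := by
  obtain ⟨r, hr, hreg⟩ := IsSMulRegular.subsingleton_linearMap_iff.mp h
  have hu : IsUnit r := by
    by_contra hu
    obtain ⟨w, hw⟩ := exists_ne (0 : W)
    exact hw (hreg (by simpa using hW r ((mem_maximalIdeal r).2 hu) w))
  have h1 : (1 : R) ∈ Module.annihilator R K := by
    have := Ideal.eq_top_of_isUnit_mem _ hr hu
    simp [this]
  rw [Module.mem_annihilator] at h1
  exact ⟨fun a b => by rw [← one_smul R a, ← one_smul R b, h1, h1]⟩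

lemma pd_of_vv (W : Type) [AddCommGroup W] [Module R W] [Module.Finite R W] [Nontrivial W]
    (hW : ∀ a ∈ maximalIdeal R, ∀ w : W, a • w = 0) (n : ℕ)
    (X : ModuleCat.{0} R) [Module.Finite R X]
    (h : VV X (ModuleCat.of R W) (n+1)) : HasProjectiveDimensionLT X (n+1) := by
  induction n generalizing X with
  | zero =>
    obtain ⟨n, f, hf, hk⟩ := exists_min_cover (R := R) X
    have hS := LinearMap.shortExact_shortComplexKer hf
    have : Subsingleton (LinearMap.ker f) := by
      apply subsingleton_of_hom (R := R) _ W hW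
      refine ⟨fun a b => ?_⟩
      suffices ∀ a : (LinearMap.ker f) →ₗ[R] W, a = 0 by rw [this a, this b]
      intro a
      obtain ⟨g, hg⟩ := Ext.contravariant_sequence_exact₁ hS (ModuleCat.of R W)
        (Ext.mk₀ (ModuleCat.ofHom a)) (add_comm 1 0) (Subsingleton.elim _ _)
      obtain ⟨g, rfl⟩ := (Ext.mk₀_bijective _ _).2 g
      rw [Ext.mk₀_comp_mk₀, (Ext.mk₀_bijective _ _).1.eq_iff] at hg
      ext x
      have hx : a x = g.hom x.1 := by
        have := congrArg (fun q => q.hom x) hg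
        exact this.symm
      rw [hx]
      have h0 : ∀ y ∈ maximalIdeal R • (⊤ : Submodule R (Fin n → R)), g.hom y = 0 := by
        intro y hy
        refine Submodule.smul_induction_on hy ?_ ?_
        · intro r hr z _
          rw [map_smul]; exact hW r hr _
        · intro u v hu hv; rw [map_add, hu, hv, add_zero]
      exact h0 _ (hk x.2)
    rw [zero_add, ← projective_iff_hasProjectiveDimensionLT_one, ← IsProjective.iff_projective]
    have hinj : Function.Injective f := by
      rw [← LinearMap.ker_eq_bot]
      exact Submodule.subsingleton_iff_eq_bot.1 this
    exact Module.Projective.of_equiv (LinearEquiv.ofBijective f ⟨hinj, hf⟩)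
  | succ n ih =>
    obtain ⟨m, f, hf, hk⟩ := exists_min_cover (R := R) X
    have hS := LinearMap.shortExact_shortComplexKer hf
    have hp : Projective (ModuleCat.of R (Fin m → R)) :=
      (IsProjective.iff_projective _).1 inferInstance
    have h1 := ih _ (vv_con1 _ hS h (Ext.subsingleton_of_projective (ModuleCat.of R (Fin m → R)) _ n))
    exact (hS.hasProjectiveDimensionLT_X₃_iff n hp).2 h1




lemma smul_id_comp' (A N : ModuleCat.{0} R) (y : R) {i : ℕ} (z : Ext A N i) :
    (Ext.mk₀ (y • 𝟙 A)).comp z (zero_add i) = y • z := by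
  rw [Ext.mk₀_smul, Ext.smul_comp, Ext.mk₀_id_comp]

lemma vv_F1 (ys : List R) (hm : ∀ y ∈ ys, y ∈ maximalIdeal R) (N : ModuleCat.{0} R)
    [Module.Finite R N] (A : Type) [AddCommGroup A] [Module R A] [Module.Finite R A]
    (hA : IsWeaklyRegular A ys) (c : ℕ)
    (h : ∀ i < ys.length + c,
      VV (ModuleCat.of R (A ⧸ Ideal.ofList ys • (⊤ : Submodule R A))) N i) :
    ∀ i < c, VV (ModuleCat.of R A) N i := by
  induction ys generalizing A c with
  | nil =>
    intro i hi
    refine vv_iso_left ?_ (h i (by simpa using hi))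
    exact (Submodule.quotEquivOfEqBot _ (by simp)).toModuleIso
  | cons y zs ih =>
    intro i hi
    rw [isWeaklyRegular_cons_iff] at hA
    simp only [List.mem_cons, forall_eq_or_imp] at hm
    have h1 : ∀ i < c + 1, VV (ModuleCat.of R (QuotSMulTop y A)) N i := by
      refine ih hm.2 (QuotSMulTop y A) hA.2 (c+1) fun i hi => ?_
      refine vv_iso_left ?_ (h i (by simp; omega))
      exact (Submodule.quotOfListConsSMulTopEquivQuotSMulTopInner A y zs).toModuleIso
    let S := (ModuleCat.of R A).smulShortComplex y
    have reg : IsSMulRegular (ModuleCat.of R A) y := hA.1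
    have hS : S.ShortExact := reg.smulShortComplex_shortExact
    have zero : VV S.X₃ N (i+1) := h1 (i+1) (by omega)
    have epi : ∀ x : Ext (ModuleCat.of R A) N i, ∃ z : Ext (ModuleCat.of R A) N i, y • z = x := by
      intro x
      obtain ⟨z, hz⟩ := Ext.contravariant_sequence_exact₁ hS N x (add_comm 1 i)
        (Subsingleton.elim _ _)
      exact ⟨z, by rw [← smul_id_comp' (ModuleCat.of R A) N y z]; exact hz⟩
    by_contra ntr
    rw [VV, not_subsingleton_iff_nontrivial] at ntr
    have : y ∈ (Module.annihilator R (Ext (ModuleCat.of R A) N i)).jacobson :=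
      (IsLocalRing.maximalIdeal_le_jacobson _) hm.1
    absurd Submodule.top_ne_pointwise_smul_of_mem_jacobson_annihilator this
    rw [eq_comm, eq_top_iff]
    intro x hx
    obtain ⟨z, rfl⟩ := epi x
    exact Submodule.smul_mem_pointwise_smul _ _ ⊤ trivial

lemma vv_quot (X : ModuleCat.{0} R) (N : Type) [AddCommGroup N] [Module R N] (y : R)
    (hy : IsSMulRegular N y) (i : ℕ) (h0 : VV X (ModuleCat.of R N) i)
    (h1 : VV X (ModuleCat.of R N) (i+1)) : VV X (ModuleCat.of R (QuotSMulTop y N)) i := by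
  have reg : IsSMulRegular (ModuleCat.of R N) y := hy
  exact vv_cov3 X reg.smulShortComplex_shortExact h0 h1

lemma vv_F2 (ys : List R) (hm : ∀ y ∈ ys, y ∈ maximalIdeal R) (N : Type)
    [AddCommGroup N] [Module R N] [Module.Finite R N]
    (A : Type) [AddCommGroup A] [Module R A] [Module.Finite R A]
    (a : A) (ha : ∀ b : A, ∃ r : R, r • a = b) (haN : ∀ n : N, ∃ f : A →ₗ[R] N, f a = n)
    (hA : IsWeaklyRegular A ys)
    (h : ∀ i < ys.length,
      VV (ModuleCat.of R (A ⧸ Ideal.ofList ys • (⊤ : Submodule R A))) (ModuleCat.of R N) i) :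
    IsWeaklyRegular N ys := by
  induction ys generalizing A N with
  | nil => exact IsWeaklyRegular.nil R N
  | cons y zs ih =>
    rw [isWeaklyRegular_cons_iff] at hA
    simp only [List.mem_cons, forall_eq_or_imp] at hm
    have h' : ∀ i < zs.length + 1, VV (ModuleCat.of R (QuotSMulTop y A ⧸
        Ideal.ofList zs • (⊤ : Submodule R (QuotSMulTop y A)))) (ModuleCat.of R N) i := by
      intro i hi
      refine vv_iso_left ?_ (h i (by simpa using hi))
      exact (Submodule.quotOfListConsSMulTopEquivQuotSMulTopInner A y zs).toModuleIso
    have h0 := vv_F1 zs hm.2 (ModuleCat.of R N) (QuotSMulTop y A) hA.2 1 h' 0 (by omega)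
    have hreg : IsSMulRegular N y := by
      have : Subsingleton (ModuleCat.of R (QuotSMulTop y A) ⟶ ModuleCat.of R N) :=
        Ext.addEquiv₀.subsingleton_congr.mp h0
      rw [isSMulRegular_iff_right_eq_zero_of_smul]
      intro n hn
      obtain ⟨f, rfl⟩ := haN n
      have hle : y • (⊤ : Submodule R A) ≤ LinearMap.ker f := by
        intro b hb
        obtain ⟨c, -, rfl⟩ := (Submodule.mem_smul_pointwise_iff_exists _ _ _).1 hb
        obtain ⟨r, rfl⟩ := ha c
        rw [LinearMap.mem_ker, map_smul, map_smul, smul_comm, hn, smul_zero]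
      have h2 : ModuleCat.ofHom (X := QuotSMulTop y A) (Submodule.liftQ _ f hle) = 0 :=
        Subsingleton.elim _ _
      have h3 := congrArg (fun q => q.hom (Submodule.Quotient.mk a)) h2
      simpa using h3
    refine IsWeaklyRegular.cons hreg ?_
    refine ih hm.2 (QuotSMulTop y N) (QuotSMulTop y A) (Submodule.Quotient.mk a) ?_ ?_ hA.2 ?_
    · intro b
      obtain ⟨b, rfl⟩ := Submodule.Quotient.mk_surjective _ b
      obtain ⟨r, rfl⟩ := ha b
      exact ⟨r, rfl⟩
    · intro n
      obtain ⟨n, rfl⟩ := Submodule.Quotient.mk_surjective _ n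
      obtain ⟨f, rfl⟩ := haN n
      exact ⟨QuotSMulTop.map y f, rfl⟩
    · intro i hi
      exact vv_quot _ N y hreg i (h' i (by omega)) (h' (i+1) (by omega))

lemma vv_B (X : ModuleCat.{0} R) (ys : List R) (U : Type) [AddCommGroup U] [Module R U]
    (hU : IsWeaklyRegular U ys) (a : ℕ)
    (h : ∀ i, a ≤ i → i ≤ a + ys.length → VV X (ModuleCat.of R U) i) :
    VV X (ModuleCat.of R (U ⧸ Ideal.ofList ys • (⊤ : Submodule R U))) a := by
  induction ys generalizing U with
  | nil =>
    refine vv_iso_right ?_ (h a le_rfl (by simp))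
    exact (Submodule.quotEquivOfEqBot _ (by simp)).symm.toModuleIso
  | cons y zs ih =>
    rw [isWeaklyRegular_cons_iff] at hU
    simp only [List.length_cons] at h
    refine vv_iso_right
      (Submodule.quotOfListConsSMulTopEquivQuotSMulTopInner U y zs).symm.toModuleIso ?_
    refine ih (QuotSMulTop y U) hU.2 fun i h1 h2 => ?_
    exact vv_quot _ U y hU.1 i (h i h1 (by omega)) (h (i+1) (by omega) (by omega))

lemma syz_smul_le (ys : List R) (hmin : maximalIdeal R ^ 2 = Ideal.ofList ys * maximalIdeal R)
    {F N : Type} [AddCommGroup F] [Module R F] [AddCommGroup N] [Module R N]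
    (f : F →ₗ[R] N) (hf : Function.Surjective f) (hk : LinearMap.ker f ≤ maximalIdeal R • ⊤)
    (hN : IsWeaklyRegular N ys) (a : R) (ha : a ∈ maximalIdeal R)
    (w : (LinearMap.ker f) ⧸ Ideal.ofList ys • (⊤ : Submodule R (LinearMap.ker f))) :
    a • w = 0 := by
  obtain ⟨u, rfl⟩ := Submodule.Quotient.mk_surjective _ w
  have hex := map_first_exact_on_four_term_right_exact_of_isSMulRegular_last
    (M := PUnit) (f₁ := (0 : PUnit →ₗ[R] LinearMap.ker f)) (f₂ := (LinearMap.ker f).subtype)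
    (f₃ := f) (rs := ys) (by
      intro x
      constructor
      · intro hx; exact ⟨0, Subtype.ext (by simpa using hx.symm)⟩
      · rintro ⟨_, rfl⟩; simp) (by intro x; simp) hf hN
  have h1 : ((a • u : LinearMap.ker f) : F) ∈ Ideal.ofList ys • (⊤ : Submodule R F) := by
    have h2 : a • (u : F) ∈ maximalIdeal R • (maximalIdeal R • (⊤ : Submodule R F)) :=
      Submodule.smul_mem_smul ha (hk u.2)
    rw [← Submodule.mul_smul, ← pow_two, hmin, Submodule.mul_smul] at h2
    exact Submodule.smul_mono le_rfl le_top h2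
  rw [← Submodule.Quotient.mk_smul]
  obtain ⟨z, hz⟩ := (hex (Submodule.Quotient.mk (a • u))).1 (by
    rw [Submodule.mapQ_apply, Submodule.Quotient.mk_eq_zero]; exact h1)
  rw [← hz]
  obtain ⟨z, rfl⟩ := Submodule.Quotient.mk_surjective _ z
  simp

/-- iterated syzygies -/
lemma exists_syz (n : ℕ) (M : Type) [AddCommGroup M] [Module R M] [Module.Finite R M] :
    ∃ (N : ModuleCat.{0} R), Module.Finite R N ∧
      (∀ (A : ModuleCat.{0} R) (t d : ℕ), (∀ i < d, VV A (ModuleCat.of R R) i) →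
        (∀ i < t, VV A (ModuleCat.of R M) i) → ∀ i < t + n, i < d → VV A N i) ∧
      (∀ (X : ModuleCat.{0} R) (a b : ℕ),
        (∀ i, a + 1 ≤ i → i ≤ b + n → VV X (ModuleCat.of R R) i) →
        (∀ i, a ≤ i → i ≤ b → VV X (ModuleCat.of R M) i) →
          ∀ i, a + n ≤ i → i ≤ b + n → VV X N i) ∧
      (Projective N → HasProjectiveDimensionLT (ModuleCat.of R M) (n+1)) := by
  induction n generalizing M with
  | zero =>
    refine ⟨ModuleCat.of R M, inferInstance, fun A t d _ h i hi _ => h i (by omega),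
      fun X a b _ h i h1 h2 => h i (by omega) (by omega), fun h => ?_⟩
    exact projective_iff_hasProjectiveDimensionLT_one.1 h
  | succ n ih =>
    obtain ⟨m, f, hf, hk⟩ := exists_min_cover (R := R) M
    have hS := LinearMap.shortExact_shortComplexKer hf
    have hp : Projective (ModuleCat.of R (Fin m → R)) :=
      (IsProjective.iff_projective _).1 inferInstance
    obtain ⟨N, hN, h1, h2, h3⟩ := ih (LinearMap.ker f)
    refine ⟨N, hN, fun A t d hR hM i hi hid => ?_, fun X a b hR hM i hi1 hi2 => ?_, fun h => ?_⟩
    · refine h1 A (min (t+1) d) d hR (fun j hj => ?_) i (by omega) hid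
      cases j with
      | zero => exact vv_cov1_zero A hS (vv_free A (hR 0 (by omega)) _)
      | succ j => exact vv_cov1 A hS (hM j (by omega)) (vv_free A (hR (j+1) (by omega)) _)
    · refine h2 X (a+1) (b+1) (fun j hj1 hj2 => hR j (by omega) (by omega)) (fun j hj1 hj2 => ?_)
        i (by omega) (by omega)
      obtain ⟨j, rfl⟩ : ∃ j', j = j' + 1 := ⟨j - 1, by omega⟩
      refine vv_cov1 X hS (hM j (by omega) (by omega)) ?_
      exact vv_free X (hR (j+1) (by omega) (by omega)) _
    · exact (hS.hasProjectiveDimensionLT_X₃_iff n hp).2 (h3 h)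

end Local

section Final
open CategoryTheory.Abelian
open RingTheory.Sequence Pointwise

variable {R : Type} [CommRing R] [IsLocalRing R] [IsNoetherianRing R]

lemma exists_reg_of_depth (M : Type) [AddCommGroup M] [Module R M] [Nontrivial M]
    [Module.Finite R M] (t : ℕ) (ht : depth R M = (t : ℕ∞)) :
    ∃ rs : List R, (∀ x ∈ rs, x ∈ maximalIdeal R) ∧ IsRegular M rs ∧ rs.length = t := by
  cases t with
  | zero => exact ⟨[], by simp, by simp [isRegular_iff], rfl⟩
  | succ t =>
    unfold depth at ht
    have h1 : (t : ℕ∞) < sSup {n : ℕ∞ | ∃ rs : List R, (∀ x ∈ rs, x ∈ maximalIdeal R) ∧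
      RingTheory.Sequence.IsRegular M rs ∧ (rs.length : ℕ∞) = n} := by
      rw [ht]; exact_mod_cast Nat.lt_succ_self t
    obtain ⟨n, ⟨rs, hm, hr, rfl⟩, hn⟩ := lt_sSup_iff.1 h1
    have h2 : (rs.length : ℕ∞) ≤ ((t + 1 : ℕ) : ℕ∞) := by
      rw [← ht]; exact le_sSup ⟨rs, hm, hr, rfl⟩
    refine ⟨rs, hm, hr, ?_⟩
    have h3 : t < rs.length := by exact_mod_cast hn
    have h4 : rs.length ≤ t + 1 := by exact_mod_cast h2
    omega

lemma smul_top_lt (M : Type) [AddCommGroup M] [Module R M] [Nontrivial M]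
    [Module.Finite R M] : maximalIdeal R • (⊤ : Submodule R M) < ⊤ := by
  refine lt_top_iff_ne_top.2 fun h => ?_
  exact (Submodule.top_ne_ideal_smul_of_le_jacobson_annihilator
    (IsLocalRing.maximalIdeal_le_jacobson _)) h.symm

lemma length_le_dim (M : Type) [AddCommGroup M] [Module R M] [Nontrivial M]
    [Module.Finite R M] (d : ℕ) (hdim : ringKrullDim R = (d : WithBot ℕ∞))
    (rs : List R) (hr : IsRegular M rs) : rs.length ≤ d := by
  have h1 := Module.supportDim_add_length_eq_supportDim_of_isRegular rs hr
  have h2 := Module.supportDim_le_ringKrullDim R M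
  rw [← h1, hdim] at h2
  have hn : Nontrivial (M ⧸ Ideal.ofList rs • (⊤ : Submodule R M)) :=
    Submodule.Quotient.nontrivial_iff.2 hr.2.symm
  have h3 : 0 ≤ Module.supportDim R (M ⧸ Ideal.ofList rs • (⊤ : Submodule R M)) :=
    by
      have : Nonempty (Module.support R (M ⧸ Ideal.ofList rs • (⊤ : Submodule R M))) :=
        Module.nonempty_support_of_nontrivial.to_subtype
      exact Order.krullDim_nonneg
  have h4 : (rs.length : WithBot ℕ∞) ≤ (d : WithBot ℕ∞) :=
    le_trans (by simpa using add_le_add_left h3 (rs.length : WithBot ℕ∞)) h2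
  exact_mod_cast h4

lemma sq_mem_ofList (xs : List R)
    (hxmin : maximalIdeal R ^ 2 = Ideal.ofList xs * maximalIdeal R) :
    maximalIdeal R ≤ (Ideal.ofList xs).radical := by
  intro a ha
  refine ⟨2, ?_⟩
  have h2 : a ^ 2 ∈ maximalIdeal R ^ 2 := Ideal.pow_mem_pow ha 2
  have h3 : maximalIdeal R ^ 2 ≤ Ideal.ofList xs := hxmin ▸ Ideal.mul_le_left
  exact h3 h2

end Final

theorem statement15 (R : Type) [CommRing R] [IsNoetherianRing R] [IsLocalRing R]
    (d : ℕ) (hdim : ringKrullDim R = (d : WithBot ℕ∞)) (hCM : depth R R = (d : ℕ∞))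
    (hmin : HasMinimalMultiplicity R d)
    (M : Type) [AddCommGroup M] [Module R M] [Module.Finite R M]
    (t : ℕ) (ht : depth R M = (t : ℕ∞))
    (hExtMM : ∀ i : ℕ, 1 ≤ i → i ≤ d + 1 → ExtVanish R M M i)
    (hExtMR : ∀ j : ℕ, 1 ≤ j → j ≤ 2 * d - t + 2 → ExtVanish R M R j) :
    Module.Free R M := by
  classical
  rcases subsingleton_or_nontrivial M with hs | hnt
  · exact Module.Free.of_subsingleton R M
  obtain ⟨ys, hys, hyreg, hylen⟩ := exists_reg_of_depth (R := R) M t ht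
  have htd : t ≤ d := hylen ▸ length_le_dim M d hdim ys hyreg
  obtain ⟨xs, hxlen, hxm, hxreg, hxmin⟩ := hmin
  have vMM : ∀ i, 1 ≤ i → i ≤ d + 1 → VV (ModuleCat.of R M) (ModuleCat.of R M) i := by
    intro i h1 h2
    obtain ⟨i, rfl⟩ : ∃ j, i = j + 1 := ⟨i - 1, by omega⟩
    exact vv_of_extVanish M M i (hExtMM _ h1 h2)
  have vMR : ∀ i, 1 ≤ i → i ≤ 2 * d - t + 2 → VV (ModuleCat.of R M) (ModuleCat.of R R) i := by
    intro i h1 h2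
    obtain ⟨i, rfl⟩ : ∃ j, i = j + 1 := ⟨i - 1, by omega⟩
    exact vv_of_extVanish M R i (hExtMR _ h1 h2)
  obtain ⟨s, hs⟩ : ∃ s, s = d - t := ⟨_, rfl⟩
  suffices hpd : HasProjectiveDimensionLT (ModuleCat.of R M) (s + 2) by
    have hp := pd_proj (ModuleCat.of R M) (s + 1) hpd fun i h1 h2 => vMR i h1 (by omega)
    have hp' : Module.Projective R M := (IsProjective.iff_projective M).2 hp
    exact Module.free_of_flat_of_isLocalRing
  -- the module `A = R/(x)`
  let A := ModuleCat.of R (R ⧸ Ideal.ofList xs • (⊤ : Submodule R R))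
  have hsupp : Module.support R A ⊆ PrimeSpectrum.zeroLocus (maximalIdeal R) := by
    rw [Module.support_eq_zeroLocus, PrimeSpectrum.zeroLocus_subset_zeroLocus_iff]
    have h1 : Module.annihilator R A = Ideal.ofList xs := by
      have : Ideal.ofList xs • (⊤ : Submodule R R) = Ideal.ofList xs := by
        simp
      exact (Ideal.annihilator_quotient (I := Ideal.ofList xs • (⊤ : Submodule R R))).trans this
    rw [h1]
    exact sq_mem_ofList xs hxmin
  have vAM : ∀ i < t, VV A (ModuleCat.of R M) i := by
    rw [← hylen]
    exact ModuleCat.subsingleton_ext_of_exists_isRegular (maximalIdeal R) A hsupp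
      (ModuleCat.of R M) (smul_top_lt M) ys hys hyreg
  have vAR : ∀ i < d, VV A (ModuleCat.of R R) i := by
    obtain ⟨zs, hzs, hzreg, hzlen⟩ := exists_reg_of_depth (R := R) R d hCM
    rw [← hzlen]
    exact ModuleCat.subsingleton_ext_of_exists_isRegular (maximalIdeal R) A hsupp
      (ModuleCat.of R R) (smul_top_lt R) zs hzs hzreg
  have regOf : ∀ (N : Type) [AddCommGroup N] [Module R N] [Module.Finite R N],
      (∀ i < d, VV A (ModuleCat.of R N) i) → RingTheory.Sequence.IsWeaklyRegular N xs := by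
    intro N _ _ _ h
    refine vv_F2 xs hxm N R 1 (fun b => ⟨b, by simp⟩)
      (fun n => ⟨LinearMap.toSpanSingleton R N n, by simp⟩) hxreg ?_
    rw [hxlen]
    exact h
  obtain ⟨N, hNfin, hN1, hN2, hN3⟩ := exists_syz (R := R) s M
  have vAN : ∀ i < d, VV A N i := fun i hi => hN1 A t d vAR vAM i (by omega) hi
  have hNreg : RingTheory.Sequence.IsWeaklyRegular N xs := regOf N vAN
  have vMN : ∀ i, 1 + s ≤ i → i ≤ (d + 1) + s → VV (ModuleCat.of R M) N i :=
    hN2 (ModuleCat.of R M) 1 (d+1) (fun i h1 h2 => vMR i (by omega) (by omega)) vMM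
  obtain ⟨m, f, hf, hk⟩ := exists_min_cover (R := R) N
  have hS := LinearMap.shortExact_shortComplexKer hf
  have hUreg : RingTheory.Sequence.IsWeaklyRegular (LinearMap.ker f) xs := by
    refine regOf _ fun i hi => ?_
    cases i with
    | zero => exact vv_cov1_zero A hS (vv_free A (vAR 0 hi) _)
    | succ i => exact vv_cov1 A hS (vAN i (by omega)) (vv_free A (vAR (i+1) hi) _)
  have vMU : VV (ModuleCat.of R M) (ModuleCat.of R ((LinearMap.ker f) ⧸
      Ideal.ofList xs • (⊤ : Submodule R (LinearMap.ker f)))) (s + 2) := by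
    refine vv_B _ xs _ hUreg (s+2) fun i h1 h2 => ?_
    obtain ⟨i, rfl⟩ : ∃ j, i = j + 1 := ⟨i - 1, by omega⟩
    refine vv_cov1 _ hS (vMN i (by omega) (by omega)) ?_
    exact vv_free _ (vMR (i+1) (by omega) (by omega)) _
  rcases subsingleton_or_nontrivial ((LinearMap.ker f) ⧸
      Ideal.ofList xs • (⊤ : Submodule R (LinearMap.ker f))) with h0 | h0
  · have hU0 : Subsingleton (LinearMap.ker f) := by
      by_contra hne
      rw [not_subsingleton_iff_nontrivial] at hne
      have h1 := smul_top_lt (R := R) (LinearMap.ker f)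
      rw [Submodule.Quotient.subsingleton_iff] at h0
      have h2 : Ideal.ofList xs ≤ maximalIdeal R := Ideal.span_le.2 hxm
      exact h1.not_ge (h0.symm.le.trans (Submodule.smul_mono h2 le_rfl))
    have hinj : Function.Injective f := by
      rw [← LinearMap.ker_eq_bot]
      exact Submodule.subsingleton_iff_eq_bot.1 hU0
    have hNp : Projective N := (IsProjective.iff_projective N).1
      (Module.Projective.of_equiv (LinearEquiv.ofBijective f ⟨hinj, hf⟩))
    have := hN3 hNp
    exact hasProjectiveDimensionLT_of_ge _ (s+1) (s+2) (by omega)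
  · exact pd_of_vv _ (fun a ha w => syz_smul_le xs hxmin f hf hk hNreg a ha w) (s+1) _ vMU
end
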